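/- arXiv:2012.04816 — 2 statements merged into one kernel-verified Lean document; each statement's English description precedes it below -/
import Mathlib

section
/- For every positive integer m and every tree T of order m, every connected finite simple graph G with minimum degree δ(G) ≥ m contains a subgraph T′ isomorphic to T such that G − V(T′) is still connected. -/
/-!
Among the connected sets `C` disjoint from some copy of `T` take a maximal one. If the copy does not
cover the complement of `C`, then the graph `H` induced on that complement has a copy `f` of `T` and
a vertex off it, and every vertex of `H` outside the set `N` of neighbours of `C` still has degree
at least `|T|`. It suffices to find a copy of `T` in `H` that misses a vertex of `N`, as `C` can
then absorb this vertex.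

If `f` covers `N`, root `T` anywhere and mark the nodes mapped into `N`. Move around the twigs, that
is, the children of marked nodes that have no marked descendants; call a vertex *freed* if it can be
left unused in this way by the marked nodes, their ancestors and their children, and call a marked
node *blocked* if its image has no freed neighbour. Choose the highest node `u` with a marked
descendant such that `u` is the root or the parent of `u` is not blocked. After some moves `u` can
itself be moved to a freed vertex `q` outside `N`. From there the whole subtree at `u` can be
rebuilt on freed vertices outside `N`, since a vertex adjacent to such a vertex is again of this
kind, unless it carries a node outside the subtree or one of the nodes at which a walk up from `u`
first leaves the blocked nodes. The latter form an antichain, so the subtree has at least as many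
leaves; postponing that many leaves makes room to avoid these vertices. When the leaves are finally
placed, only the image of a single marked node above `u` has to be avoided.
-/

open Function Order Relation Set SimpleGraph

section AncestorOrder

variable {W : Type*} {T : SimpleGraph W} (hT : T.IsTree) (r : W)

/-- The unique path from `r` to `t` in the tree `T`. -/
noncomputable def rootPath (t : W) : T.Walk r t :=
  (hT.existsUnique_path r t).choose

theorem isPath_rootPath (t : W) : (rootPath hT r t).IsPath :=
  (hT.existsUnique_path r t).choose_spec.1

variable {r}

theorem eq_rootPath {t : W} {p : T.Walk r t} (hp : p.IsPath) : p = rootPath hT r t :=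
  (hT.existsUnique_path r t).choose_spec.2 p hp

theorem not_nil_rootPath {t : W} (ht : t ≠ r) : ¬ (rootPath hT r t).Nil :=
  fun h ↦ ht h.eq.symm

theorem takeUntil_rootPath [DecidableEq W] {a b : W} (h : a ∈ (rootPath hT r b).support) :
    (rootPath hT r b).takeUntil a h = rootPath hT r a :=
  eq_rootPath hT ((isPath_rootPath hT r b).takeUntil h)

theorem dropLast_rootPath (t : W) :
    (rootPath hT r t).dropLast = rootPath hT r (rootPath hT r t).penultimate :=
  eq_rootPath hT (isPath_rootPath hT r t).dropLast

variable (r)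

/-- The ancestor order of the tree `T` rooted at `r`: `a ≤ b` if `a` lies on the path from `r`
to `b`. -/
abbrev ancestorOrder : PartialOrder W where
  le a b := a ∈ (rootPath hT r b).support
  le_refl _ := Walk.end_mem_support _
  le_trans a b c hab hbc := by
    classical
    rw [← takeUntil_rootPath hT hbc] at hab
    exact (rootPath hT r c).support_takeUntil_subset_support hbc hab
  le_antisymm a b hab hba := by
    classical
    by_contra hne
    have hlt_b := Walk.length_takeUntil_lt_length hab hne
    have hlt_a := Walk.length_takeUntil_lt_length hba (Ne.symm hne)
    rw [takeUntil_rootPath] at hlt_a hlt_b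
    exact hlt_a.asymm hlt_b

/-- The root is the least element of the ancestor order. -/
abbrev ancestorOrderBot : @OrderBot W (ancestorOrder hT r).toLE :=
  letI := ancestorOrder hT r
  { bot := r
    bot_le := fun _ ↦ Walk.start_mem_support _ }

/-- The predecessor in the ancestor order is the parent; as for every `PredOrder`, the root is
its own predecessor. -/
noncomputable abbrev ancestorPredOrder : @PredOrder W (ancestorOrder hT r).toPreorder :=
  letI := ancestorOrder hT r
  letI := ancestorOrderBot hT r
  { pred := fun t ↦ (rootPath hT r t).penultimate
    pred_le := fun t ↦ Walk.getVert_mem_support _ _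
    min_of_le_pred := by
      intro t ht
      by_contra hmin
      have htr : t ≠ r := by rintro rfl; exact hmin isMin_bot
      have hadj := Walk.adj_penultimate (not_nil_rootPath hT htr)
      exact hadj.ne (le_antisymm (Walk.getVert_mem_support _ _) ht)
    le_pred_of_lt := by
      intro a b hab
      have hb : b ≠ r := by rintro rfl; exact not_lt_bot hab
      have hmem : a ∈ (rootPath hT r b).support := hab.le
      rw [← Walk.dropLast_support_concat, List.mem_append, List.mem_singleton] at hmem
      change a ∈ (rootPath hT r (rootPath hT r b).penultimate).support
      rw [← dropLast_rootPath, Walk.support_dropLast (not_nil_rootPath hT hb)]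
      exact hmem.resolve_right hab.ne }

theorem hasse_ancestorOrder : @hasse W (ancestorOrder hT r).toPreorder = T := by
  let := ancestorOrder hT r
  let := ancestorOrderBot hT r
  let := ancestorPredOrder hT r
  have adj_of_covBy {a b : W} (hab : a ⋖ b) : T.Adj a b := by
    have hb : b ≠ r := by rintro rfl; exact not_lt_bot hab.lt
    have hadj : T.Adj (pred b) b := Walk.adj_penultimate (not_nil_rootPath hT hb)
    rwa [hab.pred_eq] at hadj
  have covBy_of_adj_of_le {a b : W} (hadj : T.Adj a b) (hab : a ≤ b) : a ⋖ b := by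
    have ha : a = pred b :=
      hT.isAcyclic.eq_penultimate_of_adj_end (isPath_rootPath hT r b) hadj.symm hab
    rw [ha]
    exact pred_covBy_of_not_isMin fun hmin ↦ hadj.ne (hmin.eq_of_le hab)
  ext a b
  refine ⟨fun h ↦ h.elim adj_of_covBy fun hba ↦ (adj_of_covBy hba).symm, fun hadj ↦ ?_⟩
  by_cases hab : a ≤ b
  · exact Or.inl (covBy_of_adj_of_le hadj hab)
  · exact Or.inr (covBy_of_adj_of_le hadj.symm
      (hT.isAcyclic.mem_support_of_ne_mem_support_of_adj_of_isPath (isPath_rootPath hT r a)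
        (isPath_rootPath hT r b) hadj hab))

end AncestorOrder

theorem exists_isMax_ncard_eq_of_isAntichain {τ : Type*} [PartialOrder τ] [PredOrder τ]
    [Finite τ] {Y : Set τ} (hY : IsAntichain (· ≤ ·) Y) :
    ∃ L : Set τ, L.ncard = Y.ncard ∧ ∀ l ∈ L, IsMax l ∧ ∃ y ∈ Y, y ≤ l := by
  have hmax (y : τ) : ∃ l, y ≤ l ∧ IsMax l := by
    obtain ⟨l, hyl, hl⟩ := Finite.exists_le_maximal (p := fun _ : τ ↦ True) (a := y) trivial
    exact ⟨l, hyl, fun _ ↦ hl.2 trivial⟩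
  choose leaf le_leaf isMax_leaf using hmax
  refine ⟨leaf '' Y, InjOn.ncard_image fun y hy z hz hyz ↦ ?_, ?_⟩
  · rcases le_total_of_directed (le_leaf y) (hyz ▸ le_leaf z) with h | h
    · exact (hY.eq hz hy h).symm
    · exact hY.eq hy hz h
  · rintro _ ⟨y, hy, rfl⟩
    exact ⟨isMax_leaf y, y, hy, le_leaf y⟩

theorem exists_adj_notMem_of_ncard_le_degree {V : Type*} {G : SimpleGraph V} [G.LocallyFinite]
    {X : Set V} (hX : X.Finite) {v : V} (hv : v ∈ X) (hdeg : X.ncard ≤ G.degree v) :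
    ∃ p, G.Adj v p ∧ p ∉ X := by
  have hcard : (X \ {v}).ncard < (G.neighborSet v).ncard := by
    rw [ncard_eq_toFinset_card' (G.neighborSet v)]
    exact (ncard_sdiff_singleton_lt_of_mem hv hX).trans_le hdeg
  obtain ⟨p, hp, hpX⟩ := exists_mem_notMem_of_ncard_lt_ncard hcard hX.sdiff
  exact ⟨p, hp, fun h ↦ hpX ⟨h, hp.ne'⟩⟩

theorem lowerSet_induction_between {τ : Type*} [PartialOrder τ] [Finite τ] {P Q : Set τ}
    (hP : IsLowerSet P) (hQ : IsLowerSet Q) (hPQ : P ⊆ Q) {motive : Set τ → Prop}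
    (base : motive P)
    (step : ∀ R t, IsLowerSet R → P ⊆ R → t ∉ R → insert t R ⊆ Q → IsLowerSet (insert t R) →
      motive R → motive (insert t R)) :
    motive Q := by
  obtain ⟨R, hPR, hR⟩ := Finite.exists_le_maximal
    (p := fun R ↦ IsLowerSet R ∧ R ⊆ Q ∧ motive R) ⟨hP, hPQ, base⟩
  obtain ⟨hR_lower, hRQ, hR_motive⟩ := hR.prop
  obtain rfl | hne := hRQ.eq_or_ssubset
  · exact hR_motive
  obtain ⟨t, ht⟩ := (toFinite (Q \ R)).exists_minimal (nonempty_of_ssubset hne)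
  have hins : IsLowerSet (insert t R) := by
    rintro a b hba (rfl | ha)
    · by_cases hbR : b ∈ R
      · exact Or.inr hbR
      · exact Or.inl (ht.eq_of_le ⟨hQ hba ht.prop.1, hbR⟩ hba)
    · exact Or.inr (hR_lower hba ha)
  have hinsQ : insert t R ⊆ Q := insert_subset ht.prop.1 hRQ
  exact absurd (mem_insert t R) fun h ↦ ht.prop.2
    (hR.le_of_ge ⟨hins, hinsQ, step R t hR_lower hPR ht.prop.2 hinsQ hins hR_motive⟩
      (subset_insert t R) h)

section Extension

variable {τ V : Type*} [PartialOrder τ] [OrderBot τ] [PredOrder τ] {G : SimpleGraph V}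
  {φ : τ → V} {P Q : Set τ}

/-- `φ` restricted to the set `P` of nodes of a rooted tree `τ` is an embedding into `G`: it is
injective, and it sends each node of `P` other than the root to a neighbour of the image of its
parent. The values of `φ` outside `P` are irrelevant when `P` is a lower set. -/
structure IsEmbeddingOn (G : SimpleGraph V) (φ : τ → V) (P : Set τ) : Prop where
  injOn : InjOn φ P
  adj : ∀ t ∈ P, t ≠ ⊥ → G.Adj (φ (pred t)) (φ t)

namespace IsEmbeddingOn

theorem mono (hφ : IsEmbeddingOn G φ Q) (hPQ : P ⊆ Q) : IsEmbeddingOn G φ P :=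
  ⟨hφ.injOn.mono hPQ, fun t ht ↦ hφ.adj t (hPQ ht)⟩

theorem of_copy (f : Copy (hasse τ) G) : IsEmbeddingOn G f univ where
  injOn := f.injective.injOn
  adj t _ ht := f.toHom.map_adj (Or.inl (pred_covBy_of_not_isMin (by simpa using ht)))

theorem exists_copy (hφ : IsEmbeddingOn G φ univ) : ∃ f : Copy (hasse τ) G, ⇑f = φ := by
  have adj_of_covBy {a b : τ} (hab : a ⋖ b) : G.Adj (φ a) (φ b) := by
    simpa only [hab.pred_eq] using hφ.adj b (mem_univ b) hab.lt.ne_bot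
  exact ⟨⟨⟨φ, fun h ↦ h.elim adj_of_covBy fun hba ↦ (adj_of_covBy hba).symm⟩,
    injOn_univ.1 hφ.injOn⟩, rfl⟩

theorem update_insert [DecidableEq τ] (hφ : IsEmbeddingOn G φ P) (hP : IsLowerSet P) {t : τ}
    (ht : t ∉ P) {p : V} (hp : p ∉ φ '' P) (hadj : t ≠ ⊥ → G.Adj (φ (pred t)) p) :
    IsEmbeddingOn G (update φ t p) (insert t P) := by
  have update_eq {s : τ} (hs : s ∈ P) : update φ t p s = φ s :=
    update_of_ne (ne_of_mem_of_not_mem hs ht) _ _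
  have eqOn : EqOn (update φ t p) φ P := fun _ ↦ update_eq
  constructor
  · rw [injOn_insert ht, eqOn.injOn_iff, eqOn.image_eq, update_self]
    exact ⟨hφ.injOn, hp⟩
  · rintro s (rfl | hs) hs_bot
    · have hpred : pred s ≠ s := (pred_lt_of_not_isMin (by simpa using hs_bot)).ne
      rw [update_self, update_of_ne hpred]
      exact hadj hs_bot
    · rw [update_eq hs, update_eq (hP (pred_le s) hs)]
      exact hφ.adj s hs hs_bot

theorem exists_update_insert [DecidableEq τ] [Finite τ] [G.LocallyFinite]
    (hφ : IsEmbeddingOn G φ P) (hP : IsLowerSet P) {t : τ} (ht : t ∉ P) (hpred : pred t ∈ P)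
    {F : Set V} (hF : F.Finite) (hdeg : P.ncard + F.ncard ≤ G.degree (φ (pred t))) :
    ∃ p ∉ F, p ∉ φ '' P ∧ G.Adj (φ (pred t)) p ∧
      IsEmbeddingOn G (update φ t p) (insert t P) := by
  have hcard : (φ '' P ∪ F).ncard ≤ G.degree (φ (pred t)) := calc
    (φ '' P ∪ F).ncard ≤ (φ '' P).ncard + F.ncard := ncard_union_le _ _
    _ ≤ P.ncard + F.ncard := by gcongr; exact ncard_image_le P.toFinite
    _ ≤ G.degree (φ (pred t)) := hdeg
  obtain ⟨p, hadj, hp⟩ := exists_adj_notMem_of_ncard_le_degree ((toFinite (φ '' P)).union hF)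
    (Or.inl (mem_image_of_mem φ hpred)) hcard
  rw [mem_union, not_or] at hp
  exact ⟨p, hp.2, hp.1, hadj, hφ.update_insert hP ht hp.1 fun _ ↦ hadj⟩

theorem exists_extension [Finite τ] [G.LocallyFinite] (hφ : IsEmbeddingOn G φ P)
    (hP : IsLowerSet P) (hP_ne : P.Nonempty) (hQ : IsLowerSet Q) (hPQ : P ⊆ Q) {F : Set V}
    (hF : F.Finite) (Allowed : τ → V → Prop)
    (hbase : ∀ t ∈ Q \ P, pred t ∈ P → Allowed (pred t) (φ (pred t)))
    (hdeg : ∀ t ∈ Q \ P, ∀ v, Allowed (pred t) v → Q.ncard + F.ncard ≤ G.degree v + 1)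
    (hstep : ∀ t ∈ Q \ P, ∀ v p, Allowed (pred t) v → G.Adj v p → p ∉ F → p ∉ φ '' P →
      Allowed t p) :
    ∃ ψ : τ → V, EqOn ψ φ P ∧ IsEmbeddingOn G ψ Q ∧ ∀ t ∈ Q \ P, Allowed t (ψ t) := by
  classical
  refine lowerSet_induction_between hP hQ hPQ
    (motive := fun R ↦ ∃ ψ : τ → V, EqOn ψ φ P ∧ IsEmbeddingOn G ψ R ∧
      ∀ t ∈ R \ P, Allowed t (ψ t)) ⟨φ, eqOn_refl φ P, hφ, by simp⟩ ?_
  rintro R t hR hPR htR hRQ ht_lower ⟨ψ, hψφ, hψ, hψA⟩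
  have htP : t ∉ P := fun h ↦ htR (hPR h)
  have htQP : t ∈ Q \ P := ⟨hRQ (mem_insert t R), htP⟩
  have ht_bot : t ≠ ⊥ := fun h ↦ htP (h ▸ hP.bot_mem.2 hP_ne)
  have hpred : pred t ∈ R :=
    mem_of_mem_insert_of_ne (ht_lower (pred_le t) (mem_insert t R))
      (pred_lt_of_not_isMin (by simpa using ht_bot)).ne
  have hA : Allowed (pred t) (ψ (pred t)) := by
    by_cases h : pred t ∈ P
    · exact hψφ h ▸ hbase t htQP h
    · exact hψA _ ⟨hpred, h⟩
  have hcard : R.ncard + F.ncard ≤ G.degree (ψ (pred t)) := by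
    have hle := ncard_le_ncard hRQ
    rw [ncard_insert_of_notMem htR] at hle
    have := hdeg t htQP _ hA
    lia
  obtain ⟨p, hpF, hpR, hadj, hp⟩ := hψ.exists_update_insert hR htR hpred hF hcard
  refine ⟨update ψ t p, fun s hs ↦ ?_, hp, ?_⟩
  · rw [update_of_ne (ne_of_mem_of_not_mem hs htP), hψφ hs]
  · rintro s ⟨rfl | hsR, hsP⟩
    · rw [update_self]
      exact hstep s htQP _ p hA hadj hpF fun h ↦ hpR (image_mono hPR (hψφ.image_eq ▸ h))
    · rw [update_of_ne (ne_of_mem_of_not_mem hsR htR)]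
      exact hψA s ⟨hsR, hsP⟩

end IsEmbeddingOn

end Extension

theorem isUpperSet_of_forall_isMax {τ : Type*} [PartialOrder τ] {S : Set τ}
    (hS : ∀ s ∈ S, IsMax s) : IsUpperSet S :=
  fun s _ hst hs ↦ (hS s hs).eq_of_le hst ▸ hs

theorem isLowerSet_insert_compl {τ : Type*} [PartialOrder τ] {u : τ} {S : Set τ}
    (hS : IsUpperSet S) (hSu : S ⊆ Ici u) : IsLowerSet (insert u Sᶜ) := by
  rintro a b hba (rfl | ha)
  · obtain rfl | hlt := hba.eq_or_lt
    · exact mem_insert b Sᶜ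
    · exact Or.inr fun hb ↦ hlt.not_ge (hSu hb)
  · exact Or.inr (hS.compl hba ha)

section Relocation

variable {τ V : Type*} [PartialOrder τ] [OrderBot τ] [PredOrder τ] [Finite τ]
  {G : SimpleGraph V} [G.LocallyFinite] {ψ : τ → V} {u : τ} {q x : V} {L : Set τ} {F R : Set V}

/-- Leaving the leaves in `L` unplaced makes room to avoid the vertices of `F`. -/
theorem exists_relocation_off_leaves (hψ : IsEmbeddingOn G ψ univ) (hq : q ∉ range ψ)
    (hadj : u ≠ ⊥ → G.Adj (ψ (pred u)) q) (hL : ∀ l ∈ L, IsMax l) (hLu : L ⊆ Ici u)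
    (hF : F.Finite) (hFL : F.ncard ≤ L.ncard) (hqR : q ∈ R)
    (hdeg : ∀ v ∈ R, Nat.card τ ≤ G.degree v)
    (hstep : ∀ v ∈ R, ∀ p, G.Adj v p → p ∉ F → p ∉ ψ '' (Ici u)ᶜ → p ∈ R) :
    ∃ χ : τ → V, IsEmbeddingOn G χ (insert u Lᶜ) ∧ EqOn χ ψ (Ici u)ᶜ ∧
      ∀ t ∈ insert u Lᶜ, u ≤ t → χ t ∈ R := by
  classical
  have hP : IsLowerSet (insert u (Ici u)ᶜ) := isLowerSet_insert_compl (isUpperSet_Ici u) le_rfl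
  have hQ : IsLowerSet (insert u Lᶜ) :=
    isLowerSet_insert_compl (isUpperSet_of_forall_isMax hL) hLu
  have hPQ : insert u (Ici u)ᶜ ⊆ insert u Lᶜ := insert_subset_insert (compl_subset_compl.2 hLu)
  have hcard : (insert u Lᶜ).ncard + L.ncard ≤ Nat.card τ + 1 := by
    have := ncard_insert_le u Lᶜ
    have := ncard_add_ncard_compl L
    lia
  have hφ := (hψ.mono (subset_univ (Ici u)ᶜ)).update_insert (isUpperSet_Ici u).compl (by simp)
    (fun h ↦ hq (image_subset_range _ _ h)) hadj
  have hψφ : EqOn (update ψ u q) ψ (Ici u)ᶜ :=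
    fun t ht ↦ update_of_ne (fun h ↦ ht (mem_Ici.2 h.ge)) _ _
  have eq_of_mem {t : τ} (ht : t ∈ insert u (Ici u)ᶜ) (hut : u ≤ t) : t = u :=
    ht.resolve_right fun h ↦ h hut
  obtain ⟨χ, hχφ, hχ, hχR⟩ := hφ.exists_extension hP (insert_nonempty _ _) hQ hPQ hF
    (fun _ v ↦ v ∈ R)
    (fun t ht htP ↦ by
      have hut : u ≤ t := by by_contra h; exact ht.2 (Or.inr h)
      have hne : t ≠ u := fun h ↦ ht.2 (Or.inl h)
      rwa [eq_of_mem htP (le_pred_of_lt (hut.lt_of_ne' hne)), update_self])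
    (fun t _ v hv ↦ by have := hdeg v hv; lia)
    (fun t _ v p hv hvp hpF hp ↦ hstep v hv p hvp hpF fun h ↦
      hp (image_mono (subset_insert _ _) (hψφ.image_eq ▸ h)))
  refine ⟨χ, hχ, (hχφ.mono (subset_insert _ _)).trans hψφ, fun t ht hut ↦ ?_⟩
  by_cases htP : t ∈ insert u (Ici u)ᶜ
  · rwa [hχφ htP, eq_of_mem htP hut, update_self]
  · exact hχR t ⟨ht, htP⟩

theorem exists_relocation (hψ : IsEmbeddingOn G ψ univ) (hq : q ∉ range ψ)
    (hadj : u ≠ ⊥ → G.Adj (ψ (pred u)) q) (hL : ∀ l ∈ L, IsMax l) (hLu : L ⊆ Ici u)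
    (hF : F.Finite) (hFL : F.ncard ≤ L.ncard) (hqR : q ∈ R)
    (hdeg : ∀ v ∈ R, Nat.card τ ≤ G.degree v)
    (hstep : ∀ v ∈ R, ∀ p, G.Adj v p → p ∉ F → p ∉ ψ '' (Ici u)ᶜ → p ∈ R)
    (hxR : x ∉ R) (hx : x ∉ ψ '' (Ici u)ᶜ) :
    ∃ ω : τ → V, IsEmbeddingOn G ω univ ∧ x ∉ range ω := by
  obtain ⟨χ, hχ, hχψ, hχR⟩ := exists_relocation_off_leaves hψ hq hadj hL hLu hF hFL
    hqR hdeg hstep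
  have hlower : IsLowerSet (insert u Lᶜ) :=
    isLowerSet_insert_compl (isUpperSet_of_forall_isMax hL) hLu
  have mem_and_lt {t : τ} (ht : t ∉ insert u Lᶜ) : t ∈ L ∧ u < t := by
    obtain ⟨hne, htL⟩ : t ≠ u ∧ t ∈ L := by simpa using ht
    exact ⟨htL, (hLu htL).lt_of_ne' hne⟩
  obtain ⟨ω, hωχ, hω, hωx⟩ := hχ.exists_extension hlower (insert_nonempty _ _)
    isLowerSet_univ (subset_univ _) (finite_singleton x) (fun t v ↦ v ≠ x ∧ (t ∉ L → v ∈ R))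
    (fun t ht hpred ↦ by
      have hR := hχR _ hpred (le_pred_of_lt (mem_and_lt ht.2).2)
      exact ⟨ne_of_mem_of_not_mem hR hxR, fun _ ↦ hR⟩)
    (fun t ht v hv ↦ by
      have hpredL : pred t ∉ L := fun h ↦
        (hL _ h).not_lt (pred_lt_of_not_isMin (mem_and_lt ht.2).2.not_isMin)
      have := hdeg v (hv.2 hpredL)
      rw [ncard_univ, ncard_singleton]
      lia)
    (fun t ht v p _ _ hp _ ↦ ⟨hp, fun h ↦ absurd (mem_and_lt ht.2).1 h⟩)
  refine ⟨ω, hω, ?_⟩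
  rintro ⟨t, rfl⟩
  by_cases ht : t ∈ insert u Lᶜ
  · by_cases hut : u ≤ t
    · exact hxR (hωχ ht ▸ hχR t ht hut)
    · exact hx ⟨t, hut, (hχψ hut).symm.trans (hωχ ht).symm⟩
  · exact (hωx t ⟨trivial, ht⟩).1 rfl

end Relocation

section Pivot

variable {τ : Type*} [PartialOrder τ] [PredOrder τ] [Finite τ] {D S : Set τ} {u : τ}

theorem exists_mem_forall_lt_pred_mem [OrderBot τ] (hD : ⊥ ∈ D) (S : Set τ) :
    ∃ u ∈ D, (u ≠ ⊥ → pred u ∉ S) ∧ ∀ t ∈ D, u < t → pred t ∈ S := by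
  obtain ⟨u, hu⟩ := (toFinite {u ∈ D | u ≠ ⊥ → pred u ∉ S}).exists_maximal ⟨⊥, hD, by simp⟩
  refine ⟨u, hu.prop.1, hu.prop.2, fun t ht hut ↦ ?_⟩
  by_contra h
  exact hu.not_prop_of_gt hut ⟨ht, fun _ ↦ h⟩

theorem mem_of_forall_lt_pred_mem (hu : ∀ t ∈ D, u < t → pred t ∈ S) (hD : IsLowerSet D)
    {s t : τ} (hus : u ≤ s) (hst : s < t) (ht : t ∈ D) : s ∈ S := by
  obtain ⟨c, hsc, hct⟩ := exists_covBy_le_of_lt hst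
  exact hsc.pred_eq ▸ hu c (hD hct ht) (hus.trans_lt hsc.lt)

/-- The nodes (possibly `u` itself) at which a walk up the tree from `u` first leaves `S`. -/
def frontierAbove (u : τ) (S : Set τ) : Set τ :=
  {t | u ≤ t ∧ t ∉ S ∧ (t = u ∨ pred t ∈ S)}

theorem isAntichain_frontierAbove (hu : ∀ t ∈ D, u < t → pred t ∈ S) (hD : IsLowerSet D)
    (hSD : S ⊆ D) : IsAntichain (· ≤ ·) (frontierAbove u S) := by
  rintro s ⟨hus, hs, -⟩ t ⟨-, -, htu⟩ hne hst
  have hlt : s < t := lt_of_le_of_ne hst hne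
  have hpred : pred t ∈ S := htu.resolve_left (hus.trans_lt hlt).ne'
  obtain rfl | hlt_pred := (le_pred_of_lt hlt).eq_or_lt
  · exact hs hpred
  · exact hs (mem_of_forall_lt_pred_mem hu hD hus hlt_pred (hSD hpred))

end Pivot

theorem notMem_image_update {α β : Type*} [DecidableEq α] {φ : α → β} {P : Set α}
    (hφ : InjOn φ P) {t : α} (ht : t ∈ P) {q : β} (hq : q ∉ φ '' P) :
    φ t ∉ update φ t q '' P := by
  rintro ⟨s, hs, hst⟩
  by_cases h : s = t
  · rw [h, update_self] at hst
    exact hq ⟨t, ht, hst.symm⟩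
  · rw [update_of_ne h] at hst
    exact h (hφ hs ht hst)

section Frame

variable {τ : Type*} [PartialOrder τ] [PredOrder τ] {A : Set τ} {t : τ}

/-- The children of the marked nodes `A` that have no marked descendant. -/
def twigs (A : Set τ) : Set τ :=
  {t | pred t ∈ A} \ lowerClosure A

/-- The nodes that are pinned down while twigs are being moved: the marked nodes, their ancestors
and their children. -/
def frame (A : Set τ) : Set τ :=
  lowerClosure A ∪ twigs A

theorem pred_mem_lowerClosure_of_mem_twigs (ht : t ∈ twigs A) : pred t ∈ lowerClosure A :=
  subset_lowerClosure ht.1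

theorem mem_lowerClosure_of_lt_of_mem_frame {s : τ} (hst : s < t) (ht : t ∈ frame A) :
    s ∈ lowerClosure A := by
  obtain ht | ht := ht
  · exact (lowerClosure A).lower hst.le ht
  · exact (lowerClosure A).lower (le_pred_of_lt hst) (pred_mem_lowerClosure_of_mem_twigs ht)

theorem isLowerSet_frame : IsLowerSet (frame A) := by
  intro t s hst ht
  obtain rfl | hlt := hst.eq_or_lt
  · exact ht
  · exact Or.inl (mem_lowerClosure_of_lt_of_mem_frame hlt ht)

theorem isLowerSet_frame_sdiff_singleton (ht : t ∈ twigs A) : IsLowerSet (frame A \ {t}) := by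
  refine fun a b hba ha ↦ ⟨isLowerSet_frame hba ha.1, ?_⟩
  rintro rfl
  exact ht.2 (mem_lowerClosure_of_lt_of_mem_frame (hba.lt_of_ne' ha.2) ha.1)

theorem mem_frame_of_pred_mem (ht : pred t ∈ A) : t ∈ frame A := by
  by_cases h : t ∈ lowerClosure A
  · exact Or.inl h
  · exact Or.inr ⟨ht, h⟩

theorem subset_frame : A ⊆ frame A :=
  subset_lowerClosure.trans subset_union_left

end Frame

theorem exists_isEmbeddingOn_univ_of_frame {τ V : Type*} [PartialOrder τ] [OrderBot τ]
    [PredOrder τ] [Finite τ] {G : SimpleGraph V} [G.LocallyFinite] {φ : τ → V} {A : Set τ}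
    (hφ : IsEmbeddingOn G φ (frame A)) (hA : A.Nonempty)
    (hdeg : ∀ v ∉ φ '' A, Nat.card τ ≤ G.degree v) {q : V} (hq : q ∉ φ '' frame A) :
    ∃ ψ : τ → V, EqOn ψ φ (frame A) ∧ IsEmbeddingOn G ψ univ ∧ q ∉ range ψ := by
  obtain ⟨ψ, hψφ, hψ, hψq⟩ := hφ.exists_extension isLowerSet_frame (hA.mono subset_frame)
    isLowerSet_univ (subset_univ _) (finite_singleton q) (fun _ v ↦ v ∉ φ '' A ∧ v ≠ q)
    (fun t ht hpred ↦ by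
      rw [hφ.injOn.mem_image_iff subset_frame hpred]
      exact ⟨fun h ↦ ht.2 (mem_frame_of_pred_mem h), fun h ↦ hq (h ▸ mem_image_of_mem φ hpred)⟩)
    (fun t _ v hv ↦ by simpa using hdeg v hv.1)
    (fun t _ v p _ _ hpq hp ↦ ⟨fun h ↦ hp (image_mono subset_frame h), hpq⟩)
  refine ⟨ψ, hψφ, hψ, ?_⟩
  rintro ⟨t, rfl⟩
  by_cases ht : t ∈ frame A
  · exact hq (hψφ ht ▸ mem_image_of_mem φ ht)
  · exact (hψq t ⟨trivial, ht⟩).2 rfl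

section Shift

variable {τ V : Type*} [PartialOrder τ] [PredOrder τ] [DecidableEq τ] {G : SimpleGraph V}
  {f φ φ' : τ → V} {A : Set τ} {t : τ}

/-- One twig is moved to a vertex not used by the frame. -/
def Shift (G : SimpleGraph V) (A : Set τ) (φ φ' : τ → V) : Prop :=
  ∃ t ∈ twigs A, ∃ q ∉ φ '' frame A, G.Adj (φ (pred t)) q ∧ φ' = update φ t q

/-- The vertices that some sequence of shifts, starting from `f`, leaves unused by the frame. -/
def freed (G : SimpleGraph V) (A : Set τ) (f : τ → V) : Set V :=
  {v | ∃ φ, ReflTransGen (Shift G A) f φ ∧ v ∉ φ '' frame A}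

/-- The marked nodes whose image has no freed neighbour. -/
def blocked (G : SimpleGraph V) (A : Set τ) (f : τ → V) : Set τ :=
  {a ∈ A | ∀ v ∈ freed G A f, ¬ G.Adj (f a) v}

theorem eqOn_of_shift (h : Shift G A φ φ') : EqOn φ' φ (lowerClosure A) := by
  obtain ⟨t, ht, q, -, -, rfl⟩ := h
  exact fun s hs ↦ update_of_ne (ne_of_mem_of_not_mem hs ht.2) _ _

theorem eqOn_of_reflTransGen_shift (h : ReflTransGen (Shift G A) f φ) :
    EqOn φ f (lowerClosure A) := by
  induction h with
  | refl => exact eqOn_refl _ _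
  | tail _ hshift ih => exact (eqOn_of_shift hshift).trans ih

theorem image_eq_of_reflTransGen_shift (h : ReflTransGen (Shift G A) f φ) : φ '' A = f '' A :=
  ((eqOn_of_reflTransGen_shift h).mono subset_lowerClosure).image_eq

variable [OrderBot τ]

theorem isEmbeddingOn_of_shift (hφ : IsEmbeddingOn G φ (frame A)) (h : Shift G A φ φ') :
    IsEmbeddingOn G φ' (frame A) := by
  obtain ⟨t, ht, q, hq, hadj, rfl⟩ := h
  have hins : insert t (frame A \ {t}) = frame A := by simp [frame, ht]
  exact hins ▸ (hφ.mono sdiff_subset).update_insert (isLowerSet_frame_sdiff_singleton ht) (t := t)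
    (by simp) (fun h ↦ hq (image_mono sdiff_subset h)) fun _ ↦ hadj

theorem isEmbeddingOn_of_reflTransGen_shift (hf : IsEmbeddingOn G f (frame A))
    (h : ReflTransGen (Shift G A) f φ) : IsEmbeddingOn G φ (frame A) := by
  induction h with
  | refl => exact hf
  | tail _ hshift ih => exact isEmbeddingOn_of_shift ih hshift

theorem mem_freed_iff_of_reflTransGen_shift (hf : IsEmbeddingOn G f (frame A))
    (h : ReflTransGen (Shift G A) f φ) : φ t ∈ freed G A f ↔ f t ∈ freed G A f := by
  induction h with
  | refl => rfl
  | @tail φ φ' hφ hshift ih =>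
    have hφ' := hφ.tail hshift
    obtain ⟨s, hs, q, hq, -, rfl⟩ := id hshift
    rw [← ih]
    by_cases hts : t = s
    · subst hts
      rw [update_self]
      exact iff_of_true ⟨φ, hφ, hq⟩ ⟨_, hφ', notMem_image_update
        (isEmbeddingOn_of_reflTransGen_shift hf hφ).injOn (Or.inr hs) hq⟩
    · rw [update_of_ne hts]

/-- A twig adjacent to a freed vertex can move there, and so its own position is freed too. -/
theorem mem_freed_of_pred_notMem_blocked (hf : IsEmbeddingOn G f (frame A)) (ht : t ∈ twigs A)
    (hpred : pred t ∉ blocked G A f) (h : ReflTransGen (Shift G A) f φ) :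
    φ t ∈ freed G A f := by
  obtain ⟨v, ⟨χ, hχ, hv⟩, hadj⟩ : ∃ v ∈ freed G A f, G.Adj (f (pred t)) v := by
    by_contra! hnone
    exact hpred ⟨ht.1, hnone⟩
  rw [← eqOn_of_reflTransGen_shift hχ (pred_mem_lowerClosure_of_mem_twigs ht)] at hadj
  rw [mem_freed_iff_of_reflTransGen_shift hf h, ← mem_freed_iff_of_reflTransGen_shift hf hχ]
  exact ⟨_, hχ.tail ⟨t, ht, v, hv, hadj, rfl⟩,
    notMem_image_update (isEmbeddingOn_of_reflTransGen_shift hf hχ).injOn (Or.inr ht) hv⟩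

theorem mem_freed_sdiff_of_adj (hf : IsEmbeddingOn G f (frame A))
    (hφ : ReflTransGen (Shift G A) f φ)
    {u : τ} (hu : ∀ t ∈ lowerClosure A, u < t → pred t ∈ blocked G A f) {v p : V}
    (hv : v ∈ freed G A f) (hadj : G.Adj v p)
    (hpF : p ∉ φ '' frontierAbove u (blocked G A f))
    (hpu : p ∉ φ '' (frame A ∩ (Ici u)ᶜ)) :
    p ∈ freed G A f \ f '' A := by
  rw [← image_eq_of_reflTransGen_shift hφ]
  by_cases hp : p ∈ φ '' frame A
  swap
  · exact ⟨⟨φ, hφ, hp⟩, fun h ↦ hp (image_mono subset_frame h)⟩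
  obtain ⟨t, ht, rfl⟩ := hp
  have hut : u ≤ t := by
    by_contra h
    exact hpu (mem_image_of_mem φ ⟨ht, h⟩)
  have ht_unblocked : t ∉ blocked G A f := by
    intro h
    rw [eqOn_of_reflTransGen_shift hφ (subset_lowerClosure h.1)] at hadj
    exact h.2 v hv hadj.symm
  obtain ⟨htu, hpred⟩ : t ≠ u ∧ pred t ∉ blocked G A f := by
    rw [← not_or]
    exact fun h ↦ hpF ⟨t, ⟨hut, ht_unblocked, h⟩, rfl⟩
  have ht_lower : t ∉ lowerClosure A := fun h ↦ hpred (hu t h (hut.lt_of_ne' htu))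
  refine ⟨mem_freed_of_pred_notMem_blocked hf (ht.resolve_left ht_lower) hpred hφ, fun h ↦ ?_⟩
  have htA := ((isEmbeddingOn_of_reflTransGen_shift hf hφ).injOn.mem_image_iff subset_frame ht).1 h
  exact ht_lower (subset_lowerClosure htA)

end Shift

section Release

variable {τ V : Type*} [PartialOrder τ] [OrderBot τ] [PredOrder τ] [Finite τ]
  {G : SimpleGraph V} [G.LocallyFinite] {f : τ → V} {A : Set τ}

theorem exists_shifts_adj_of_pred_notMem_blocked [DecidableEq τ] (hf : IsEmbeddingOn G f univ)
    (hdeg : ∀ v ∉ f '' A, Nat.card τ ≤ G.degree v) {h : V} (hh : h ∉ range f)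
    {u : τ} (hu : u ≠ ⊥ → pred u ∉ blocked G A f) :
    ∃ φ, ReflTransGen (Shift G A) f φ ∧
      ∃ q ∉ φ '' frame A, u ≠ ⊥ → G.Adj (f (pred u)) q := by
  have notMem_image {v : V} (hv : v ∉ range f) : v ∉ f '' frame A :=
    fun h ↦ hv (image_subset_range _ _ h)
  by_cases hu_bot : u = ⊥
  · exact ⟨f, .refl, h, notMem_image hh, fun h ↦ absurd hu_bot h⟩
  by_cases hpred : pred u ∈ A
  · obtain ⟨v, ⟨φ, hφ, hv⟩, hadj⟩ : ∃ v ∈ freed G A f, G.Adj (f (pred u)) v := by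
      by_contra! hnone
      exact hu hu_bot ⟨hpred, hnone⟩
    exact ⟨φ, hφ, v, hv, fun _ ↦ hadj⟩
  · have hcard : (range f).ncard ≤ G.degree (f (pred u)) := by
      rw [ncard_range_of_injective (injOn_univ.1 hf.injOn)]
      exact hdeg _ fun h ↦ hpred (((injOn_univ.1 hf.injOn).mem_set_image).1 h)
    obtain ⟨q, hadj, hq⟩ :=
      exists_adj_notMem_of_ncard_le_degree (finite_range f) (mem_range_self _) hcard
    exact ⟨f, .refl, q, notMem_image hq, fun _ ↦ hadj⟩

theorem exists_isEmbeddingOn_notMem_range (hf : IsEmbeddingOn G f univ) (hA : A.Nonempty)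
    (hdeg : ∀ v ∉ f '' A, Nat.card τ ≤ G.degree v) {h : V} (hh : h ∉ range f) :
    ∃ ω : τ → V, IsEmbeddingOn G ω univ ∧ ∃ a ∈ A, f a ∉ range ω := by
  classical
  have hf_frame := hf.mono (subset_univ (frame A))
  have hbot : ⊥ ∈ lowerClosure A := (lowerClosure A).lower.bot_mem.2 (hA.mono subset_lowerClosure)
  obtain ⟨u, hu_lower, hu_pred, hu⟩ := exists_mem_forall_lt_pred_mem hbot (blocked G A f)
  obtain ⟨a, haA, hua⟩ := mem_lowerClosure.1 hu_lower
  obtain ⟨φ, hφ, q, hq, hadj⟩ := exists_shifts_adj_of_pred_notMem_blocked hf hdeg hh hu_pred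
  have hφA : φ '' A = f '' A := image_eq_of_reflTransGen_shift hφ
  obtain ⟨ψ, hψφ, hψ, hqψ⟩ := exists_isEmbeddingOn_univ_of_frame
    (isEmbeddingOn_of_reflTransGen_shift hf_frame hφ) hA (hφA ▸ hdeg) hq
  have hψf : EqOn ψ f (lowerClosure A) :=
    (hψφ.mono subset_union_left).trans (eqOn_of_reflTransGen_shift hφ)
  have hadj_ψ (hu_bot : u ≠ ⊥) : G.Adj (ψ (pred u)) q := by
    rw [hψf ((lowerClosure A).lower (pred_le u) hu_lower)]
    exact hadj hu_bot
  obtain ⟨L, hL_card, hL⟩ := exists_isMax_ncard_eq_of_isAntichain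
    (isAntichain_frontierAbove hu (lowerClosure A).lower fun t ht ↦ subset_lowerClosure ht.1)
  have hLu : L ⊆ Ici u := fun l hl ↦ (hL l hl).2.elim fun y hy ↦ hy.1.1.trans hy.2
  have hq_freed : q ∈ freed G A f \ f '' A :=
    ⟨⟨φ, hφ, hq⟩, fun h ↦ hq (image_mono subset_frame (hφA ▸ h))⟩
  have ha : f a ∉ ψ '' (Ici u)ᶜ := by
    rw [← hψf (subset_lowerClosure haA), hψ.injOn.mem_image_iff (subset_univ _) (mem_univ a)]
    exact not_not_intro hua
  obtain ⟨ω, hω, haω⟩ := exists_relocation hψ hqψ hadj_ψ (fun l hl ↦ (hL l hl).1) hLu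
    (toFinite (φ '' frontierAbove u (blocked G A f)))
    (hL_card ▸ ncard_image_le (toFinite _)) hq_freed (fun v hv ↦ hdeg v hv.2)
    (fun v hv p hvp hpF hp ↦ mem_freed_sdiff_of_adj hf_frame hφ hu hv.1 hvp hpF fun h ↦
      hp (image_mono inter_subset_right ((hψφ.mono inter_subset_left).image_eq ▸ h)))
    (fun h ↦ h.2 (mem_image_of_mem f haA)) ha
  exact ⟨ω, hω, a, haA, haω⟩

end Release

section Tree

variable {V W : Type*} {G : SimpleGraph V} {T : SimpleGraph W}

theorem exists_order_hasse_eq (hT : T.IsTree) :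
    ∃ (_ : PartialOrder W) (_ : OrderBot W) (_ : PredOrder W), hasse W = T :=
  let r := hT.connected.nonempty.some
  ⟨ancestorOrder hT r, ancestorOrderBot hT r, ancestorPredOrder hT r, hasse_ancestorOrder hT r⟩

theorem exists_copy_notMem_range [Finite W] [G.LocallyFinite] (hT : T.IsTree)
    (hdeg : ∀ v, Nat.card W ≤ G.degree v) (r : V) : ∃ f : Copy T G, r ∉ range f := by
  obtain ⟨_, _, _, rfl⟩ := exists_order_hasse_eq hT
  obtain ⟨w, hw⟩ := (G.degree_pos_iff_exists_adj r).1 (Nat.card_pos.trans_le (hdeg r))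
  have hroot : IsEmbeddingOn G (fun _ : W ↦ w) {⊥} := ⟨by simp, by simp⟩
  obtain ⟨φ, hφ_root, hφ, hφ_ne⟩ := hroot.exists_extension (Iic_bot (α := W) ▸ isLowerSet_Iic ⊥)
    (singleton_nonempty ⊥) isLowerSet_univ (subset_univ _) (finite_singleton r)
    (fun _ v ↦ v ≠ r) (fun _ _ _ ↦ hw.ne') (fun _ _ v _ ↦ by simpa using hdeg v)
    (fun _ _ _ _ _ _ hp _ ↦ hp)
  obtain ⟨f, rfl⟩ := hφ.exists_copy
  refine ⟨f, ?_⟩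
  rintro ⟨t, rfl⟩
  by_cases ht : t ∈ ({⊥} : Set W)
  · exact hw.ne (hφ_root ht)
  · exact hφ_ne t ⟨trivial, ht⟩ rfl

theorem exists_copy_notMem_range_of_nonempty [Finite W] [G.LocallyFinite] (hT : T.IsTree)
    (f : Copy T G) {h : V} (hh : h ∉ range f) {N : Set V} (hN : N.Nonempty)
    (hdeg : ∀ v ∉ N, Nat.card W ≤ G.degree v) : ∃ g : Copy T G, ∃ x ∈ N, x ∉ range g := by
  by_cases hNf : N ⊆ range f
  swap
  · exact ⟨f, not_subset.1 hNf⟩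
  obtain ⟨_, _, _, rfl⟩ := exists_order_hasse_eq hT
  have himage : f '' (f ⁻¹' N) = N := image_preimage_eq_of_subset hNf
  obtain ⟨ω, hω, a, haN, ha⟩ := exists_isEmbeddingOn_notMem_range (.of_copy f)
    (hN.preimage' hNf) (himage.symm ▸ hdeg) hh
  obtain ⟨g, rfl⟩ := hω.exists_copy
  exact ⟨g, f a, haN, ha⟩

theorem exists_adj_mem_notMem (hG : G.Connected) {C : Set V} (hC : C.Nonempty) {h : V}
    (hh : h ∉ C) : ∃ c ∈ C, ∃ v ∉ C, G.Adj c v := by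
  obtain ⟨c, hc⟩ := hC
  obtain ⟨p⟩ := hG c h
  obtain ⟨d, -, hd_fst, hd_snd⟩ := p.exists_boundary_dart C hc hh
  exact ⟨d.fst, hd_fst, d.snd, hd_snd, d.adj⟩

theorem connected_induce_insert {C : Set V} (hC : (G.induce C).Connected) {c v : V}
    (hc : c ∈ C) (hadj : G.Adj c v) : (G.induce (insert v C)).Connected := by
  have hunion : C ∪ {c, v} = insert v C := by grind
  rw [← hunion]
  exact induce_union_connected hC.preconnected (induce_pair_connected_of_adj hadj).preconnected
    ⟨c, hc, mem_insert c {v}⟩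

theorem exists_connected_insert_disjoint_copy [Finite W] [Fintype V]
    [DecidableRel G.Adj] (hT : T.IsTree) (hG : G.Connected) (hdeg : ∀ v, Nat.card W ≤ G.degree v)
    {C : Set V} (hC : (G.induce C).Connected) (f : Copy T G) (hf : Disjoint (range f) C) {h : V}
    (hhf : h ∉ range f) (hhC : h ∉ C) :
    ∃ v ∉ C, (G.induce (insert v C)).Connected ∧
      ∃ g : Copy T G, Disjoint (range g) (insert v C) := by
  classical
  rw [Set.disjoint_left, forall_mem_range] at hf
  let f' : Copy T (G.induce Cᶜ) :=
    ⟨⟨fun t ↦ ⟨f t, hf t⟩, f.toHom.map_adj⟩, fun a b hab ↦ f.injective (congrArg Subtype.val hab)⟩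
  have hhf' : ⟨h, hhC⟩ ∉ range f' := fun ⟨t, ht⟩ ↦ hhf ⟨t, congrArg Subtype.val ht⟩
  let N : Set (Cᶜ : Set V) := {v | ∃ c ∈ C, G.Adj c v}
  have hN : N.Nonempty := by
    obtain ⟨c, hc, v, hv, hadj⟩ := exists_adj_mem_notMem hG (nonempty_coe_sort.1 hC.nonempty) hhC
    exact ⟨⟨v, hv⟩, c, hc, hadj⟩
  have hdegN : ∀ v ∉ N, Nat.card W ≤ (G.induce Cᶜ).degree v := by
    intro v hv
    rw [degree_induce_of_neighborSet_subset fun p hp hpC ↦ hv ⟨p, hpC, hp.symm⟩]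
    exact hdeg v
  obtain ⟨g, x, ⟨c, hc, hadj⟩, hx⟩ := exists_copy_notMem_range_of_nonempty hT f' hhf' hN hdegN
  refine ⟨x, x.2, connected_induce_insert hC hc hadj, (Copy.induce G Cᶜ).comp g, ?_⟩
  rw [Set.disjoint_left, forall_mem_range]
  rintro t (ht | ht)
  · exact hx ⟨t, Subtype.ext ht⟩
  · exact (g t).2 ht

end Tree

/-- For every positive integer `m` and every tree `T` of order `m`, every
connected graph `G` with `δ(G) ≥ m` contains a subgraph `T' ≅ T` such that
`G - V(T')` is still connected. -/
theorem stmt_14 {V W : Type*} [Fintype V] [DecidableEq V] [Fintype W]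
    (G : SimpleGraph V) [DecidableRel G.Adj] (m : ℕ) (hm : 0 < m)
    (T : SimpleGraph W) (hT : T.IsTree) (hTcard : Fintype.card W = m)
    (hGconn : G.Connected)
    (hδ : ∀ v : V, m ≤ G.degree v) :
    ∃ f : W → V, Function.Injective f ∧
      (∀ a b : W, T.Adj a b → G.Adj (f a) (f b)) ∧
      (G.induce ((Set.range f)ᶜ)).Connected := by
  rw [← hTcard, ← Nat.card_eq_fintype_card] at hδ
  obtain ⟨r⟩ := hGconn.nonempty
  obtain ⟨f₀, hf₀⟩ := exists_copy_notMem_range hT hδ r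
  obtain ⟨C, -, hC⟩ := Finite.exists_le_maximal (a := {r})
    (p := fun C ↦ (G.induce C).Connected ∧ ∃ f : Copy T G, Disjoint (range f) C)
    ⟨by rw [induce_singleton_eq_top]; exact connected_top, f₀, by simpa using hf₀⟩
  obtain ⟨hC_conn, f, hf⟩ := hC.prop
  have hcover : (range f)ᶜ = C := by
    refine Subset.antisymm (fun h hhf ↦ ?_) (subset_compl_iff_disjoint_left.2 hf)
    by_contra hhC
    obtain ⟨v, hvC, hv⟩ := exists_connected_insert_disjoint_copy hT hGconn hδ hC_conn f hf hhf hhC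
    exact hvC (hC.le_of_ge hv (subset_insert v C) (mem_insert v C))
  exact ⟨f, f.injective, fun _ _ ↦ f.toHom.map_adj, hcover ▸ hC_conn⟩
end

section
/- Let k, m be positive integers and let G be a k-connected finite simple graph with κ(G) = k, minimum degree δ(G) ≥ ⌊3k/2⌋ + m − 1, and maximum degree Δ(G) = |V(G)| − 1, and suppose G is not complete. Let t ≥ 0 with t + 1 ≤ m. Then G contains a spider T^{t;m−t−1}_m of order m such that G − V(T^{t;m−t−1}_m) is k-connected. -/
/-- A graph `G` is `k`-connected if it has at least `k+1` vertices and
deleting any set of fewer than `k` vertices leaves a connected graph. -/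
def KConnected {V : Type*} (G : SimpleGraph V) (k : ℕ) : Prop :=
  k + 1 ≤ Nat.card V ∧
    ∀ X : Finset V, X.card < k → (G.induce ((X : Set V)ᶜ)).Connected

/-- The spider `T^{t;m-t-1}_m` of order `m`: the root is `0`, the vertices
`1, …, t` are legs of length one attached to the root, and
`t+1, t+2, …, m-1` is one leg which is a path of order `m - t - 1`
starting at the neighbour `t+1` of the root. -/
def spider (m t : ℕ) : SimpleGraph (Fin m) :=
  SimpleGraph.fromRel fun a b =>
    (a.val = 0 ∧ 1 ≤ b.val ∧ b.val ≤ t) ∨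
    (a.val = 0 ∧ b.val = t + 1) ∨
    (t + 1 ≤ a.val ∧ b.val = a.val + 1)

/-!
Separations of order `k` exist, and inside one side of such a separation there is a minimal set
`F` with `k` boundary vertices, an end in the sense of Mader. It is enough to find the spider
inside `F` so that after its deletion every nonempty subset of `F` still has at least `k` boundary
vertices: a smaller separation of the remaining graph could then be uncrossed with the one at `F`.

Deleting a vertex of an end `B` of `G - R` preserves this expansion as long as the vertices in and
around `B` have few neighbours in `R`; the universal vertex, which lies in every boundary, gains
the one vertex needed in the submodularity count. What is left of `B` contains an end again,
adjacent to the deleted vertex, so deletions trace out paths. To obtain the short legs, delete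
vertices so that the successive ends are as small as possible. This makes every boundary vertex of
the current end inside `F` exchangeable with a deleted one. Hence the first vertex met with `t`
deleted neighbours can serve as root, and the long leg is then grown through the ends. Such a
vertex must appear, because the ends keep shrinking.
-/

open Finset

section Boundary

variable {V : Type*} [Fintype V] [DecidableEq V] {G : SimpleGraph V} [DecidableRel G.Adj]
  {k : ℕ} {R B C D E F : Finset V}

variable (G) in
/-- The vertex boundary of `D` in `G - R`: the vertices outside `D ∪ R` with a neighbour in `D`.
Deleted vertices are recorded by the set `R`, so that all boundaries live in the type `V`. -/
def vertexBoundary (R D : Finset V) : Finset V := {v | v ∉ D ∧ v ∉ R ∧ ∃ d ∈ D, G.Adj d v}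

variable (G) in
/-- The number of neighbours of `x` in `R`. -/
def degreeIn (R : Finset V) (x : V) : ℕ := #(G.neighborFinset x ∩ R)

variable (G) in
/-- In `G - R`, every nonempty subset of `F` has at least `k` boundary vertices. -/
def Expands (k : ℕ) (F R : Finset V) : Prop :=
  ∀ D ⊆ F \ R, D.Nonempty → k ≤ #(vertexBoundary G R D)

variable (G) in
/-- Mader's ends: the inclusion-minimal nonempty sets with at most `k` boundary vertices
in `G - R`. -/
def IsEnd (k : ℕ) (R B : Finset V) : Prop :=
  Minimal (fun D ↦ D.Nonempty ∧ #(vertexBoundary G R D) ≤ k) B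

lemma mem_vertexBoundary {v : V} :
    v ∈ vertexBoundary G R D ↔ v ∉ D ∧ v ∉ R ∧ ∃ d ∈ D, G.Adj d v := by
  simp [vertexBoundary]

lemma vertexBoundary_insert (p : V) :
    vertexBoundary G (insert p R) D = (vertexBoundary G R D).erase p := by
  grind [mem_vertexBoundary]

lemma vertexBoundary_subset_of_subset {R' : Finset V} (h : R ⊆ R') :
    vertexBoundary G R' D ⊆ vertexBoundary G R D := by
  grind [mem_vertexBoundary]

lemma vertexBoundary_erase_subset (p : V) :
    vertexBoundary G (insert p R) (D.erase p) ⊆ vertexBoundary G R D := by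
  grind [mem_vertexBoundary]

lemma card_vertexBoundary_exchange_le {c : V} (r : V) (hc : c ∈ vertexBoundary G R D) :
    #(vertexBoundary G (insert c (R.erase r)) D) ≤ #(vertexBoundary G R D) := by
  have hsub : vertexBoundary G (insert c (R.erase r)) D ⊆
      insert r ((vertexBoundary G R D).erase c) := by
    grind [mem_vertexBoundary]
  calc _ ≤ #((vertexBoundary G R D).erase c) + 1 := (card_le_card hsub).trans (card_insert_le _ _)
    _ = _ := card_erase_add_one hc

lemma vertexBoundary_union_subset :
    vertexBoundary G R (C ∪ B) ⊆
      (vertexBoundary G R B \ C) ∪ (vertexBoundary G R C \ B) := by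
  grind [mem_vertexBoundary]

lemma vertexBoundary_inter_subset :
    vertexBoundary G R (D ∩ E) ⊆ (D ∩ vertexBoundary G R E) ∪
      (vertexBoundary G R D ∩ vertexBoundary G R E) ∪ (vertexBoundary G R D ∩ E) := by
  grind [mem_vertexBoundary]

lemma vertexBoundary_sdiff_vertexBoundary_subset (hDE : Disjoint D E) (hDR : Disjoint D R) :
    vertexBoundary G R (D \ vertexBoundary G R E) ⊆
      (vertexBoundary G R D \ E) ∪ (D ∩ vertexBoundary G R E) := by
  grind [mem_vertexBoundary, disjoint_left, SimpleGraph.adj_comm]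

lemma card_vertexBoundary_inter_add_card_vertexBoundary_union_le :
    #(vertexBoundary G R (C ∩ B)) + #(vertexBoundary G R (C ∪ B)) ≤
      #(vertexBoundary G R C) + #(vertexBoundary G R B) := by
  rw [← card_union_add_card_inter (vertexBoundary G R C),
    ← card_union_add_card_inter (vertexBoundary G R (C ∩ B))]
  refine add_le_add (card_le_card ?_) (card_le_card ?_) <;> grind [mem_vertexBoundary]

lemma mem_vertexBoundary_of_isUniversal {u : V} (hu : G.IsUniversal u) (huD : u ∉ D)
    (huR : u ∉ R) (hD : D.Nonempty) : u ∈ vertexBoundary G R D := by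
  obtain ⟨d, hd⟩ := hD
  exact mem_vertexBoundary.2 ⟨huD, huR, d, hd, (hu (ne_of_mem_of_not_mem hd huD).symm).symm⟩

lemma degreeIn_insert_le (p x : V) : degreeIn G (insert p R) x ≤ degreeIn G R x + 1 := by
  unfold degreeIn
  exact (card_le_card (by grind)).trans (card_insert_le p _)

lemma degreeIn_insert_of_not_adj {p x : V} (h : ¬ G.Adj x p) :
    degreeIn G (insert p R) x = degreeIn G R x := by
  rw [degreeIn, inter_insert_of_notMem (by simpa using h), degreeIn]

lemma degree_lt_card_add_card_vertexBoundary_add_degreeIn {x : V} (hx : x ∈ D) :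
    G.degree x < #D + #(vertexBoundary G R D) + degreeIn G R x := by
  have hsub : G.neighborFinset x ⊆
      (D.erase x ∪ vertexBoundary G R D) ∪ (G.neighborFinset x ∩ R) := by
    intro v hv
    have := (G.mem_neighborFinset x v).1 hv
    grind [mem_vertexBoundary, SimpleGraph.irrefl]
  have hcard := (card_le_card hsub).trans (card_union_le _ _)
  have := card_union_le (D.erase x) (vertexBoundary G R D)
  have := card_erase_add_one hx
  rw [G.card_neighborFinset_eq_degree] at hcard
  unfold degreeIn
  omega

lemma exists_isEnd_subset (hD : D.Nonempty) (hcard : #(vertexBoundary G R D) ≤ k) :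
    ∃ B ⊆ D, IsEnd G k R B :=
  exists_minimal_le_of_wellFoundedLT _ D ⟨hD, hcard⟩

namespace IsEnd

lemma nonempty (hB : IsEnd G k R B) : B.Nonempty := hB.prop.1

lemma card_vertexBoundary_le (hB : IsEnd G k R B) : #(vertexBoundary G R B) ≤ k := hB.prop.2

lemma lt_card_vertexBoundary (hB : IsEnd G k R B) (hE : E ⊂ B) (hne : E.Nonempty) :
    k < #(vertexBoundary G R E) := by
  by_contra! hle
  exact hB.not_prop_of_lt hE ⟨hne, hle⟩

lemma degree_lt_card_add (hB : IsEnd G k R B) {b : V} (hb : b ∈ B) :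
    G.degree b < #B + k + degreeIn G R b := by
  have := degree_lt_card_add_card_vertexBoundary_add_degreeIn (G := G) (R := R) hb
  have := hB.card_vertexBoundary_le
  omega

lemma exists_adj_of_subset_erase (hB : IsEnd G k R B) {p : V} (hp : p ∈ B) (hE : E ⊆ B.erase p)
    (hEnd : IsEnd G k (insert p R) E) : ∃ b ∈ E, G.Adj p b := by
  have hlt := hB.lt_card_vertexBoundary (hE.trans_ssubset (erase_ssubset hp)) hEnd.nonempty
  have hle := hEnd.card_vertexBoundary_le
  rw [vertexBoundary_insert] at hle
  have hpE : p ∈ vertexBoundary G R E := by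
    by_contra hpE
    rw [erase_eq_of_notMem hpE] at hle
    omega
  obtain ⟨-, -, b, hb, hadj⟩ := mem_vertexBoundary.1 hpE
  exact ⟨b, hb, hadj.symm⟩

lemma disjoint_of_not_subset (hB : IsEnd G k R B) (hexp : Expands G k F R) (hBF : B ⊆ F \ R)
    (hCF : C ⊆ F \ R) (hC : #(vertexBoundary G R C) ≤ k) (hBC : ¬ B ⊆ C) : Disjoint C B := by
  by_contra hnd
  have hinter := hB.lt_card_vertexBoundary (E := C ∩ B) (by grind)
    (not_disjoint_iff_nonempty_inter.1 hnd)
  have hunion := hexp (C ∪ B) (union_subset hCF hBF) (hB.nonempty.mono subset_union_right)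
  have := card_vertexBoundary_inter_add_card_vertexBoundary_union_le (G := G) (R := R) (C := C)
    (B := B)
  have := hB.card_vertexBoundary_le
  omega

end IsEnd

lemma Expands.card_inter_vertexBoundary_lt_card_sdiff (hexp : Expands G k F R) (hBF : B ⊆ F \ R)
    (hCF : C ⊆ F \ R) (hCne : C.Nonempty) (hB : #(vertexBoundary G R B) ≤ k)
    (hcommon : (vertexBoundary G R B ∩ vertexBoundary G R C).Nonempty) :
    #(C ∩ vertexBoundary G R B) < #(vertexBoundary G R C \ B) := by
  have hunion := hexp (C ∪ B) (union_subset hCF hBF) (hCne.mono subset_union_left)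
  have hsub := card_le_card (vertexBoundary_union_subset (G := G) (R := R) (C := C) (B := B))
  have hcommon' :
      0 < #((vertexBoundary G R B \ C) ∩ (vertexBoundary G R C \ B)) := by
    obtain ⟨u, hu⟩ := hcommon
    exact card_pos.2 ⟨u, by grind [mem_vertexBoundary]⟩
  have := card_union_add_card_inter (vertexBoundary G R B \ C) (vertexBoundary G R C \ B)
  have := card_inter_add_card_sdiff (vertexBoundary G R B) C
  rw [inter_comm C]
  omega

lemma IsEnd.card_inter_vertexBoundary_lt_card_inter (hB : IsEnd G k R B) (hBR : Disjoint B R)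
    (hCB : Disjoint C B) (hmeet : (B ∩ vertexBoundary G R C).Nonempty) (hcard : k / 2 < #B)
    (hC : #(vertexBoundary G R C) ≤ k)
    (hlt : #(C ∩ vertexBoundary G R B) < #(vertexBoundary G R C \ B)) :
    #(C ∩ vertexBoundary G R B) < #(vertexBoundary G R C ∩ B) := by
  by_cases hne : (B \ vertexBoundary G R C).Nonempty
  · have hlarge := hB.lt_card_vertexBoundary (E := B \ vertexBoundary G R C) (by grind) hne
    have hsub := (card_le_card (vertexBoundary_sdiff_vertexBoundary_subset (G := G) hCB.symm
      hBR)).trans (card_union_le _ _)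
    have := card_inter_add_card_sdiff (vertexBoundary G R B) C
    have := hB.card_vertexBoundary_le
    rw [inter_comm C, inter_comm _ B] at *
    omega
  · have hBC : B ⊆ vertexBoundary G R C := by simpa [sdiff_eq_empty_iff_subset] using hne
    have := card_inter_add_card_sdiff (vertexBoundary G R C) B
    rw [inter_eq_right.2 hBC] at *
    omega

lemma Expands.subset_vertexBoundary (hexp : Expands G k F R) (hCF : C ⊆ F \ R)
    (hCB : Disjoint C B) (hC : #(vertexBoundary G R C) ≤ k)
    (hlt : #(C ∩ vertexBoundary G R B) < #(vertexBoundary G R C ∩ B)) :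
    C ⊆ vertexBoundary G R B := by
  by_contra hne
  have hlarge := hexp (C \ vertexBoundary G R B) (sdiff_subset.trans hCF)
    (sdiff_nonempty.2 hne)
  have hsub := (card_le_card (vertexBoundary_sdiff_vertexBoundary_subset (G := G) hCB
    (disjoint_sdiff_self_left.mono_left hCF))).trans (card_union_le _ _)
  have := card_inter_add_card_sdiff (vertexBoundary G R C) B
  omega

lemma IsEnd.subset_vertexBoundary_and_two_mul_card_add_two_le (hB : IsEnd G k R B)
    (hexp : Expands G k F R) (hBF : B ⊆ F \ R) (hBcard : k / 2 < #B) (hCF : C ⊆ F \ R)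
    (hCB : Disjoint C B) (hCne : C.Nonempty) (hC : #(vertexBoundary G R C) ≤ k)
    (hmeet : (B ∩ vertexBoundary G R C).Nonempty)
    (hcommon : (vertexBoundary G R B ∩ vertexBoundary G R C).Nonempty) :
    C ⊆ vertexBoundary G R B ∧ 2 * #C + 2 ≤ k := by
  have houter : #(C ∩ vertexBoundary G R B) < #(vertexBoundary G R C \ B) :=
    hexp.card_inter_vertexBoundary_lt_card_sdiff hBF hCF hCne hB.card_vertexBoundary_le hcommon
  have hinner : #(C ∩ vertexBoundary G R B) < #(vertexBoundary G R C ∩ B) :=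
    hB.card_inter_vertexBoundary_lt_card_inter (disjoint_sdiff_self_left.mono_left hBF) hCB
      hmeet hBcard hC houter
  have hCsub : C ⊆ vertexBoundary G R B := hexp.subset_vertexBoundary hCF hCB hC hinner
  refine ⟨hCsub, ?_⟩
  have := card_inter_add_card_sdiff (vertexBoundary G R C) B
  rw [inter_eq_left.2 hCsub] at houter hinner
  omega

/-- If deleting `p` destroyed expansion, some `C` would have exactly `k` boundary vertices, `p`
among them. Uncrossing `C` with the end `B` forces `C` into the boundary of `B` and makes it so
small that the degree condition fails in `C`. -/
theorem Expands.insert_of_isEnd {m : ℕ} {p u : V}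
    (hdeg : ∀ v, 3 * k / 2 + m ≤ G.degree v + 1) (hu : G.IsUniversal u) (huF : u ∉ F)
    (hexp : Expands G k F R) (hRF : R ⊆ F) (hBF : B ⊆ F \ R) (hB : IsEnd G k R B) (hp : p ∈ B)
    (hpR : degreeIn G R p < m) (hbd : ∀ c ∈ F ∩ vertexBoundary G R B, degreeIn G R c ≤ m) :
    Expands G k F (insert p R) := by
  intro C hC hCne
  by_contra! hlt
  have hCF : C ⊆ F \ R := by grind
  have huR : u ∉ R := fun h ↦ huF (hRF h)
  have hge := hexp C hCF hCne
  rw [vertexBoundary_insert] at hlt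
  have hpC : p ∈ vertexBoundary G R C := by
    by_contra hpC
    rw [erase_eq_of_notMem hpC] at hlt
    omega
  have hCk : #(vertexBoundary G R C) ≤ k := by
    have := card_erase_add_one hpC
    omega
  have hCB : Disjoint C B := hB.disjoint_of_not_subset hexp hBF hCF hCk (by grind)
  have hcommon : u ∈ vertexBoundary G R B ∩ vertexBoundary G R C :=
    mem_inter.2 ⟨mem_vertexBoundary_of_isUniversal hu (by grind) huR hB.nonempty,
      mem_vertexBoundary_of_isUniversal hu (by grind) huR hCne⟩
  have hBcard : k / 2 < #B := by
    have := hB.degree_lt_card_add hp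
    have := hdeg p
    omega
  obtain ⟨hCsub, hCcard⟩ := hB.subset_vertexBoundary_and_two_mul_card_add_two_le hexp hBF hBcard
    hCF hCB hCne hCk ⟨p, mem_inter.2 ⟨hp, hpC⟩⟩ ⟨u, hcommon⟩
  obtain ⟨c, hc⟩ := hCne
  have := degree_lt_card_add_card_vertexBoundary_add_degreeIn (G := G) (R := R) hc
  have := hbd c (mem_inter.2 ⟨(mem_sdiff.1 (hCF hc)).1, hCsub hc⟩)
  have := hdeg c
  omega

variable (G) in
/-- A set `R ⊆ F` that can be deleted without losing the expansion of `F`, and that induces a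
subgraph of maximum degree at most `β`. -/
structure IsRemovable (k : ℕ) (F R : Finset V) (β : ℕ) : Prop where
  subset : R ⊆ F
  expands : Expands G k F R
  degreeIn_le : ∀ r ∈ R, degreeIn G R r ≤ β

variable (G) in
/-- An end of `G - R` inside `F` whose vertices have at most `β` neighbours in the deleted set `R`;
its boundary vertices in `F` are allowed one more. -/
structure IsSparseEnd (k : ℕ) (F R B : Finset V) (β : ℕ) : Prop where
  subset : B ⊆ F \ R
  isEnd : IsEnd G k R B
  degreeIn_le : ∀ b ∈ B, degreeIn G R b ≤ β
  degreeIn_boundary_le : ∀ c ∈ F ∩ vertexBoundary G R B, degreeIn G R c ≤ β + 1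

lemma IsRemovable.mono {β γ : ℕ} (hR : IsRemovable G k F R β) (h : β ≤ γ) :
    IsRemovable G k F R γ :=
  ⟨hR.subset, hR.expands, fun r hr ↦ (hR.degreeIn_le r hr).trans h⟩

lemma IsSparseEnd.mono {β γ : ℕ} (hB : IsSparseEnd G k F R B β) (h : β ≤ γ) :
    IsSparseEnd G k F R B γ :=
  ⟨hB.subset, hB.isEnd, fun b hb ↦ (hB.degreeIn_le b hb).trans h,
    fun c hc ↦ (hB.degreeIn_boundary_le c hc).trans (by omega)⟩

variable {m β : ℕ} {p u x : V}

lemma IsRemovable.insert_of_forall_adj {γ : ℕ} (hdeg : ∀ v, 3 * k / 2 + m ≤ G.degree v + 1)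
    (hu : G.IsUniversal u) (huF : u ∉ F) (hR : IsRemovable G k F R γ)
    (hB : IsSparseEnd G k F R B β) (hβ : β < m) (hp : p ∈ B) (hpγ : degreeIn G R p ≤ γ)
    (hadj : ∀ r ∈ R, G.Adj r p → degreeIn G R r < γ) :
    IsRemovable G k F (insert p R) γ where
  subset := insert_subset (mem_sdiff.1 (hB.subset hp)).1 hR.subset
  expands := hR.expands.insert_of_isEnd hdeg hu huF hR.subset hB.subset hB.isEnd hp
    ((hB.degreeIn_le p hp).trans_lt hβ) fun c hc ↦ (hB.degreeIn_boundary_le c hc).trans hβ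
  degreeIn_le r hr := by
    obtain rfl | hr := mem_insert.1 hr
    · rwa [degreeIn_insert_of_not_adj G.irrefl]
    by_cases hrp : G.Adj r p
    · exact (degreeIn_insert_le p r).trans (hadj r hr hrp)
    · rw [degreeIn_insert_of_not_adj hrp]
      exact hR.degreeIn_le r hr

lemma IsRemovable.insert (hdeg : ∀ v, 3 * k / 2 + m ≤ G.degree v + 1)
    (hu : G.IsUniversal u) (huF : u ∉ F) (hR : IsRemovable G k F R β)
    (hB : IsSparseEnd G k F R B β) (hβ : β < m) (hp : p ∈ B) :
    IsRemovable G k F (insert p R) (β + 1) :=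
  (hR.mono β.le_succ).insert_of_forall_adj hdeg hu huF hB hβ hp
    ((hB.degreeIn_le p hp).trans β.le_succ) fun r hr _ ↦ Nat.lt_succ_of_le (hR.degreeIn_le r hr)

lemma IsSparseEnd.of_subset_erase (hB : IsSparseEnd G k F R B β) (hE : E ⊆ B.erase p)
    (hEnd : IsEnd G k (insert p R) E) : IsSparseEnd G k F (insert p R) E (β + 1) where
  subset := by have := hB.subset; grind
  isEnd := hEnd
  degreeIn_le b hb :=
    (degreeIn_insert_le p b).trans (Nat.succ_le_succ (hB.degreeIn_le b (mem_of_mem_erase (hE hb))))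
  degreeIn_boundary_le c hc := by
    refine (degreeIn_insert_le p c).trans (Nat.succ_le_succ ?_)
    have hcB : c ∈ B ∨ c ∈ F ∩ vertexBoundary G R B := by grind [mem_vertexBoundary]
    obtain hcB | hcB := hcB
    · exact (hB.degreeIn_le c hcB).trans β.le_succ
    · exact hB.degreeIn_boundary_le c hcB

lemma IsEnd.exists_isEnd_subset_erase (hdeg : ∀ v, 3 * k / 2 + m ≤ G.degree v + 1)
    (hB : IsEnd G k R B) (hp : p ∈ B) (hpR : degreeIn G R p + 2 ≤ m) :
    ∃ E ⊆ B.erase p, IsEnd G k (insert p R) E := by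
  refine exists_isEnd_subset (card_pos.1 ?_)
    ((card_le_card (vertexBoundary_erase_subset p)).trans hB.card_vertexBoundary_le)
  have := hB.degree_lt_card_add hp
  have := hdeg p
  rw [card_erase_of_mem hp]
  omega

lemma IsSparseEnd.exists_next (hdeg : ∀ v, 3 * k / 2 + m ≤ G.degree v + 1)
    (hB : IsSparseEnd G k F R B β) (hp : p ∈ B) (hβ : β + 2 ≤ m) :
    ∃ E, IsSparseEnd G k F (insert p R) E (β + 1) ∧ ∃ b ∈ E, G.Adj p b := by
  have := hB.degreeIn_le p hp
  obtain ⟨E, hE, hEnd⟩ := hB.isEnd.exists_isEnd_subset_erase hdeg hp (by omega)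
  exact ⟨E, hB.of_subset_erase hE hEnd, hB.isEnd.exists_adj_of_subset_erase hp hE hEnd⟩

lemma IsRemovable.exists_path (hdeg : ∀ v, 3 * k / 2 + m ≤ G.degree v + 1)
    (hu : G.IsUniversal u) (huF : u ∉ F) (s : ℕ) (hR : IsRemovable G k F R β) (hs : β + s ≤ m)
    (hend : 0 < s → ∃ B, IsSparseEnd G k F R B β ∧ ∃ b ∈ B, G.Adj x b) :
    ∃ l : List V, l.length = s ∧ l.Nodup ∧ (∀ v ∈ l, v ∉ R) ∧ List.IsChain G.Adj (x :: l) ∧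
      IsRemovable G k F (R ∪ l.toFinset) (β + s) := by
  induction s generalizing R x β with
  | zero => exact ⟨[], by simpa using hR⟩
  | succ s ih =>
    obtain ⟨B, hB, p, hp, hxp⟩ := hend s.succ_pos
    obtain ⟨l, hlen, hnodup, hdisj, hchain, hrem⟩ := ih
      (hR.insert hdeg hu huF hB (by omega) hp) (by omega)
      fun hs ↦ hB.exists_next hdeg hp (by omega)
    refine ⟨p :: l, by simp [hlen], ?_, ?_, hchain.cons_cons hxp, ?_⟩
    · exact List.nodup_cons.2 ⟨fun hpl ↦ hdisj p hpl (mem_insert_self p R), hnodup⟩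
    · have := hB.subset hp
      grind
    · convert hrem using 1
      · simp [insert_union]
      · omega

/-- If `D` is swallowed by `R`, then a single vertex of `D` already has enough neighbours
outside `R`. -/
lemma IsRemovable.expands_of_subset {W : Finset V}
    (hdeg : ∀ v, 3 * k / 2 + m ≤ G.degree v + 1) (hu : G.IsUniversal u) (huF : u ∉ F)
    (hR : IsRemovable G k F R m) (hW : W ⊆ R) : Expands G k F W := by
  intro D hD hDne
  by_cases hDR : (D \ R).Nonempty
  · exact (hR.expands (D \ R) (by grind) hDR).trans
      (card_le_card (by grind [mem_vertexBoundary]))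
  replace hDR : D ⊆ R := by simpa [sdiff_eq_empty_iff_subset] using hDR
  have hpos : 0 < #(vertexBoundary G W D) := by
    have := hR.subset
    exact card_pos.2 ⟨u, mem_vertexBoundary_of_isUniversal hu (by grind) (by grind) hDne⟩
  obtain ⟨r, hr⟩ := hDne
  have hnbr : G.neighborFinset r ⊆ vertexBoundary G W D ∪ (G.neighborFinset r ∩ R) := by
    intro v hv
    have := (G.mem_neighborFinset r v).1 hv
    grind [mem_vertexBoundary]
  have hcard := (card_le_card hnbr).trans (card_union_le _ _)
  rw [G.card_neighborFinset_eq_degree] at hcard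
  have hle : degreeIn G R r ≤ m := hR.degreeIn_le r (hDR hr)
  have := hdeg r
  unfold degreeIn at hle
  omega

end Boundary

section Spider

variable {V : Type*} {G : SimpleGraph V} {m t : ℕ} {x : V} {L l : List V}

lemma getElem_cons_append_mem_left {i : ℕ} (hi : i < (x :: (L ++ l)).length) (hpos : 1 ≤ i)
    (hle : i ≤ L.length) : (x :: (L ++ l))[i] ∈ L := by
  obtain ⟨i, rfl⟩ := Nat.exists_eq_add_of_le' hpos
  rw [List.getElem_cons_succ, List.getElem_append_left (by omega)]
  exact List.getElem_mem _

lemma getElem_cons_append_of_lt {i : ℕ} (hi : i < (x :: (L ++ l)).length)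
    (hlt : L.length < i) :
    (x :: (L ++ l))[i] = (x :: l)[i - L.length]'(by simp at hi ⊢; omega) := by
  grind

lemma adj_getElem_of_spider_adj (hlegs : ∀ v ∈ L, G.Adj x v) (hpath : List.IsChain G.Adj (x :: l))
    {a b : Fin (x :: (L ++ l)).length} (hab : (spider _ L.length).Adj a b) :
    G.Adj (x :: (L ++ l))[a] (x :: (L ++ l))[b] := by
  wlog hlt : a < b generalizing a b
  · exact (this hab.symm (lt_of_le_of_ne (not_lt.1 hlt) hab.ne')).symm
  rw [List.isChain_iff_getElem] at hpath
  obtain ⟨a, ha⟩ := a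
  obtain ⟨b, hb⟩ := b
  simp only [spider, SimpleGraph.fromRel_adj, Fin.mk_lt_mk, Fin.getElem_fin] at hab hlt ⊢
  by_cases hbL : b ≤ L.length
  · obtain rfl : a = 0 := by omega
    exact hlegs _ (getElem_cons_append_mem_left hb (by omega) hbL)
  rw [getElem_cons_append_of_lt hb (by omega)]
  by_cases ha0 : a = 0
  · obtain ⟨rfl, rfl⟩ : a = 0 ∧ b = L.length + 1 := by omega
    simpa using hpath 0 (by simp at hb ⊢; omega)
  · obtain rfl : b = a + 1 := by omega
    rw [getElem_cons_append_of_lt ha (by omega)]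
    convert hpath (a - L.length) (by simp at hb ⊢; omega) using 2
    omega

lemma exists_copy_spider (hm : 1 + t + l.length = m) (hL : L.length = t)
    (hnodup : (x :: (L ++ l)).Nodup) (hlegs : ∀ v ∈ L, G.Adj x v)
    (hpath : List.IsChain G.Adj (x :: l)) :
    ∃ f : (spider m t).Copy G, Set.range f = {v | v ∈ x :: (L ++ l)} := by
  subst hL
  obtain rfl : (x :: (L ++ l)).length = m := by simp; omega
  exact ⟨⟨⟨(x :: (L ++ l)).get, adj_getElem_of_spider_adj hlegs hpath⟩,
    List.nodup_iff_injective_get.1 hnodup⟩, Set.range_list_get _⟩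

end Spider

section RemovableSpider

variable {V : Type*} [Fintype V] [DecidableEq V] {G : SimpleGraph V} [DecidableRel G.Adj]
  {k m t e : ℕ} {R B E F : Finset V} {c p r u x : V}

variable (G) in
/-- `F` contains a spider of order `m` with `t` legs of length one whose deletion does not destroy
the expansion of `F`. -/
def HasRemovableSpider (k : ℕ) (F : Finset V) (m t : ℕ) : Prop :=
  ∃ f : (spider m t).Copy G, univ.image f ⊆ F ∧ Expands G k F (univ.image f)

lemma HasRemovableSpider.of_root (hdeg : ∀ v, 3 * k / 2 + m ≤ G.degree v + 1)
    (hu : G.IsUniversal u) (huF : u ∉ F) (ht : t < m) (hR : IsRemovable G k F R (t + 1))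
    (hx : x ∈ R) (hxt : t ≤ degreeIn G R x)
    (hend : t + 1 < m → ∃ B, IsSparseEnd G k F R B (t + 1) ∧ ∃ b ∈ B, G.Adj x b) :
    HasRemovableSpider G k F m t := by
  obtain ⟨l, hlen, hnodup, hdisj, hpath, hrem⟩ := hR.exists_path (x := x) hdeg hu huF
    (m - (t + 1)) (by omega) fun _ ↦ hend (by omega)
  obtain ⟨L, hL, hLt⟩ := exists_subset_card_eq hxt
  have hLR : ∀ v ∈ L, G.Adj x v ∧ v ∈ R := fun v hv ↦ by simpa using hL hv
  have hspider : (x :: (L.toList ++ l)).Nodup := by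
    have := L.nodup_toList
    grind [mem_toList, SimpleGraph.irrefl]
  obtain ⟨f, hf⟩ := exists_copy_spider (m := m) (t := t) (by omega) (by simpa using hLt) hspider
    (fun v hv ↦ (hLR v (mem_toList.1 hv)).1) hpath
  have himage : univ.image f ⊆ R ∪ l.toFinset := by
    rw [← coe_subset, coe_image, coe_univ, Set.image_univ, hf]
    intro v
    simp only [Set.mem_ofPred_eq, List.mem_cons, List.mem_append, mem_toList, mem_coe, mem_union,
      List.mem_toFinset]
    grind
  exact ⟨f, himage.trans hrem.subset,
    (hrem.mono (by omega)).expands_of_subset hdeg hu huF himage⟩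

lemma HasRemovableSpider.of_adj_end (hdeg : ∀ v, 3 * k / 2 + m ≤ G.degree v + 1)
    (hu : G.IsUniversal u) (huF : u ∉ F) (ht : t < m) (hR : IsRemovable G k F R t)
    (hB : IsSparseEnd G k F R B t) (hr : r ∈ R) (hrB : ∃ b ∈ B, G.Adj r b)
    (hrt : t ≤ degreeIn G R r) : HasRemovableSpider G k F m t :=
  .of_root hdeg hu huF ht (hR.mono t.le_succ) hr hrt fun _ ↦ ⟨B, hB.mono t.le_succ, hrB⟩

lemma HasRemovableSpider.of_mem_end (hdeg : ∀ v, 3 * k / 2 + m ≤ G.degree v + 1)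
    (hu : G.IsUniversal u) (huF : u ∉ F) (ht : t < m) (hR : IsRemovable G k F R t)
    (hB : IsSparseEnd G k F R B t) (hp : p ∈ B) (hpt : t ≤ degreeIn G R p) :
    HasRemovableSpider G k F m t :=
  .of_root hdeg hu huF ht (hR.insert hdeg hu huF hB ht hp) (mem_insert_self p R)
    (hpt.trans_eq (degreeIn_insert_of_not_adj G.irrefl).symm)
    fun _ ↦ hB.exists_next hdeg hp (by omega)

variable (G) in
/-- One step of the deletion process on pairs (deleted set, current end): a vertex is
deleted from the current end, and the process moves to an end inside what is left of it. -/
def DeletionStep (k : ℕ) (s s' : Finset V × Finset V) : Prop :=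
  ∃ p ∈ s.2, s'.1 = insert p s.1 ∧ s'.2 ⊆ s.2.erase p ∧ IsEnd G k s'.1 s'.2

variable (G) in
/-- The pairs (deleted set, current end) reached from `(∅, F)` after `e` deletion steps, each of
which makes the new end as small as possible among all continuations of the previous stage. -/
def optimalStages (k : ℕ) (F : Finset V) : ℕ → Set (Finset V × Finset V)
  | 0 => {(∅, F)}
  | e + 1 => {s' | MinimalFor (fun s' ↦ ∃ s ∈ optimalStages k F e, DeletionStep G k s s')
      (fun s' ↦ #s'.2) s'}

lemma mem_optimalStages_succ {s' : Finset V × Finset V} :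
    s' ∈ optimalStages G k F (e + 1) ↔
      MinimalFor (fun s' ↦ ∃ s ∈ optimalStages G k F e, DeletionStep G k s s')
        (fun s' ↦ #s'.2) s' :=
  Iff.rfl

lemma disjoint_of_mem_optimalStages (h : (R, B) ∈ optimalStages G k F e) : Disjoint B R := by
  induction e generalizing R B with
  | zero =>
    obtain ⟨rfl, rfl⟩ := Prod.mk.inj h
    exact disjoint_empty_right _
  | succ e ih =>
    obtain ⟨⟨R, B⟩, hs, p, -, rfl, hsub, -⟩ := (mem_optimalStages_succ.1 h).prop
    exact disjoint_insert_right.2 ⟨fun hp ↦ notMem_erase p B (hsub hp),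
      (ih hs).mono_left (hsub.trans (erase_subset p B))⟩

lemma card_add_le_of_mem_optimalStages (h : (R, B) ∈ optimalStages G k F e) : #B + e ≤ #F := by
  induction e generalizing R B with
  | zero =>
    obtain ⟨rfl, rfl⟩ := Prod.mk.inj h
    rfl
  | succ e ih =>
    obtain ⟨⟨R, B'⟩, hs, p, hp, rfl, hsub, -⟩ := (mem_optimalStages_succ.1 h).prop
    have := card_le_card hsub
    have := card_erase_add_one hp
    have := ih hs
    dsimp only at *
    omega

lemma insert_mem_optimalStages {R' B' : Finset V} (h' : (R', B') ∈ optimalStages G k F (e + 1))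
    (h : (R, B) ∈ optimalStages G k F e) (hp : p ∈ B) (hB' : B' ⊆ B.erase p)
    (hcard : #(vertexBoundary G (insert p R) B') ≤ k) :
    (insert p R, B') ∈ optimalStages G k F (e + 1) := by
  have hopt := mem_optimalStages_succ.1 h'
  obtain ⟨-, -, -, -, -, -, hEnd'⟩ := hopt.prop
  obtain ⟨E, hEB', hE⟩ := exists_isEnd_subset hEnd'.nonempty hcard
  have hmin : #B' ≤ #E := hopt.le (j := (insert p R, E))
    ⟨(R, B), h, p, hp, rfl, hEB'.trans hB', hE⟩
  obtain rfl := eq_of_subset_of_card_le hEB' hmin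
  exact ⟨⟨(R, B), h, p, hp, rfl, hB', hE⟩, fun _ hj _ ↦ hopt.le hj⟩

lemma exists_exchange_mem_optimalStages (h : (R, B) ∈ optimalStages G k F e) (hcF : c ∈ F)
    (hc : c ∈ vertexBoundary G R B) :
    ∃ r ∈ R, (insert c (R.erase r), B) ∈ optimalStages G k F e := by
  induction e generalizing R B with
  | zero =>
    obtain ⟨rfl, rfl⟩ := Prod.mk.inj h
    exact absurd hcF (mem_vertexBoundary.1 hc).1
  | succ e ih =>
    obtain ⟨⟨R₀, B₀⟩, h₀, p, hp, rfl, hsub, hEnd⟩ := (mem_optimalStages_succ.1 h).prop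
    dsimp only at hp hsub hEnd hc
    have hpR₀ : p ∉ R₀ := disjoint_left.1 (disjoint_of_mem_optimalStages h₀) hp
    have hcard (r : V) := (card_vertexBoundary_exchange_le r hc).trans hEnd.card_vertexBoundary_le
    by_cases hcB₀ : c ∈ B₀
    · refine ⟨p, mem_insert_self p R₀, ?_⟩
      have hcardp := hcard p
      rw [erase_insert hpR₀] at hcardp ⊢
      exact insert_mem_optimalStages h h₀ hcB₀ (by grind [mem_vertexBoundary]) hcardp
    · obtain ⟨r, hr, hexch⟩ := ih h₀ (by grind [mem_vertexBoundary])
      refine ⟨r, mem_insert_of_mem hr, ?_⟩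
      have hcardr := hcard r
      have hpr : p ≠ r := fun hpr ↦ hpR₀ (hpr ▸ hr)
      rw [erase_insert_of_ne hpr, insert_comm] at hcardr ⊢
      exact insert_mem_optimalStages h hexch hp hsub hcardr

variable (G) in
/-- At every optimal stage with `e` deletions the deleted set is removable and the current end is
sparse, both with the number `t` of short legs as the degree bound. -/
def StagesSparse (k : ℕ) (F : Finset V) (t e : ℕ) : Prop :=
  ∀ R B, (R, B) ∈ optimalStages G k F e → IsRemovable G k F R t ∧ IsSparseEnd G k F R B t

lemma StagesSparse.isSparseEnd_of_not_hasRemovableSpider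
    (hdeg : ∀ v, 3 * k / 2 + m ≤ G.degree v + 1) (hu : G.IsUniversal u) (huF : u ∉ F)
    (ht : t < m) (hno : ¬ HasRemovableSpider G k F m t) (hsparse : StagesSparse G k F t e)
    (h : (R, B) ∈ optimalStages G k F e) : ∃ s, t = s + 1 ∧ IsSparseEnd G k F R B s := by
  obtain ⟨hR, hB⟩ := hsparse R B h
  have hlt : ∀ b ∈ B, degreeIn G R b < t := fun b hb ↦ by
    by_contra! hbt
    exact hno (.of_mem_end hdeg hu huF ht hR hB hb hbt)
  obtain ⟨b, hb⟩ := hB.isEnd.nonempty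
  obtain ⟨s, rfl⟩ := Nat.exists_eq_succ_of_ne_zero (hlt b hb).ne_bot
  refine ⟨s, rfl, hB.subset, hB.isEnd, fun b hb ↦ Nat.le_of_lt_succ (hlt b hb), fun c hc ↦ ?_⟩
  by_contra! hct
  obtain ⟨hcF, hcB⟩ := mem_inter.1 hc
  -- Exchanging `c` for a deleted vertex makes it a root, at the cost of at most one neighbour.
  obtain ⟨r, hr, hexch⟩ := exists_exchange_mem_optimalStages h hcF hcB
  obtain ⟨hR', hB'⟩ := hsparse _ _ hexch
  have hcr := degreeIn_insert_le (G := G) (R := R.erase r) r c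
  rw [insert_erase hr] at hcr
  obtain ⟨-, -, d, hd, hdc⟩ := mem_vertexBoundary.1 hcB
  refine hno (.of_adj_end hdeg hu huF ht hR' hB' (mem_insert_self c _) ⟨d, hd, hdc.symm⟩ ?_)
  rw [degreeIn_insert_of_not_adj G.irrefl]
  omega

lemma StagesSparse.succ (hdeg : ∀ v, 3 * k / 2 + m ≤ G.degree v + 1) (hu : G.IsUniversal u)
    (huF : u ∉ F) (ht : t < m) (hno : ¬ HasRemovableSpider G k F m t)
    (hsparse : StagesSparse G k F t e) : StagesSparse G k F t (e + 1) := by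
  intro R' B' h'
  obtain ⟨⟨R, B⟩, h, p, hp, rfl, hsub, hEnd⟩ := (mem_optimalStages_succ.1 h').prop
  obtain ⟨s, rfl, hB⟩ := hsparse.isSparseEnd_of_not_hasRemovableSpider hdeg hu huF ht hno h
  obtain ⟨hR, hB₁⟩ := hsparse R B h
  refine ⟨hR.insert_of_forall_adj hdeg hu huF hB (by omega) hp (hB₁.degreeIn_le p hp)
    fun r hr hrp ↦ ?_, hB.of_subset_erase hsub hEnd⟩
  by_contra! hrt
  exact hno (.of_adj_end hdeg hu huF ht hR hB₁ hr ⟨p, hp, hrp⟩ hrt)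

lemma StagesSparse.nonempty_succ (hdeg : ∀ v, 3 * k / 2 + m ≤ G.degree v + 1)
    (hu : G.IsUniversal u) (huF : u ∉ F) (ht : t < m) (hno : ¬ HasRemovableSpider G k F m t)
    (hsparse : StagesSparse G k F t e) (hne : (optimalStages G k F e).Nonempty) :
    (optimalStages G k F (e + 1)).Nonempty := by
  obtain ⟨⟨R, B⟩, h⟩ := hne
  obtain ⟨s, rfl, hB⟩ := hsparse.isSparseEnd_of_not_hasRemovableSpider hdeg hu huF ht hno h
  obtain ⟨p, hp⟩ := hB.isEnd.nonempty
  have := hB.degreeIn_le p hp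
  obtain ⟨E, hE, hEnd⟩ := hB.isEnd.exists_isEnd_subset_erase hdeg hp (by omega)
  exact exists_minimalFor_of_wellFoundedLT _ _ ⟨(insert p R, E), (R, B), h, p, hp, rfl, hE, hEnd⟩

/-- Without such a spider the deletion process would never stop, although every step shrinks the
current end. -/
theorem hasRemovableSpider_of_isEnd (hdeg : ∀ v, 3 * k / 2 + m ≤ G.degree v + 1)
    (hu : G.IsUniversal u) (huF : u ∉ F) (ht : t < m) (hF : IsEnd G k ∅ F)
    (hexp : Expands G k F ∅) : HasRemovableSpider G k F m t := by
  by_contra hno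
  have hstages : ∀ e, StagesSparse G k F t e ∧ (optimalStages G k F e).Nonempty := by
    intro e
    induction e with
    | zero =>
      refine ⟨fun R B h ↦ ?_, (∅, F), rfl⟩
      obtain ⟨rfl, rfl⟩ := Prod.mk.inj h
      exact ⟨⟨by simp, hexp, by simp⟩, by simp, hF, by simp [degreeIn], by simp [degreeIn]⟩
    | succ e ih =>
      exact ⟨ih.1.succ hdeg hu huF ht hno, ih.1.nonempty_succ hdeg hu huF ht hno ih.2⟩
  obtain ⟨-, ⟨R, B⟩, h⟩ := hstages (#F + 1)
  have := card_add_le_of_mem_optimalStages h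
  omega

end RemovableSpider

section Separation

variable {V : Type*} [DecidableEq V] {G : SimpleGraph V} {k : ℕ}
  {A C D F F' R S W X : Finset V} {u : V}

variable (G) in
/-- The sets `A`, `C` and `X` partition the vertices of `G - R`, and `X` separates the nonempty
sides `A` and `C`. -/
structure IsSeparation (R A C X : Finset V) : Prop where
  nonempty_left : A.Nonempty
  nonempty_right : C.Nonempty
  cover : ∀ v, v ∈ A ∨ v ∈ C ∨ v ∈ X ∨ v ∈ R
  sides_disjoint : Disjoint A C
  left_disjoint : Disjoint A (X ∪ R)
  right_disjoint : Disjoint C (X ∪ R)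
  separator_disjoint : Disjoint X R
  not_adj : ∀ a ∈ A, ∀ c ∈ C, ¬ G.Adj a c

namespace IsSeparation

lemma symm (h : IsSeparation G R A C X) : IsSeparation G R C A X where
  nonempty_left := h.nonempty_right
  nonempty_right := h.nonempty_left
  cover v := or_left_comm.1 (h.cover v)
  sides_disjoint := h.sides_disjoint.symm
  left_disjoint := h.right_disjoint
  right_disjoint := h.left_disjoint
  separator_disjoint := h.separator_disjoint
  not_adj c hc a ha hca := h.not_adj a ha c hc hca.symm

lemma notMem_left_of_isUniversal (h : IsSeparation G R A C X) (hu : G.IsUniversal u) : u ∉ A := by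
  intro huA
  obtain ⟨c, hc⟩ := h.nonempty_right
  exact h.not_adj u huA c hc (hu (disjoint_iff_ne.1 h.sides_disjoint u huA c hc))

lemma card_inter_add (h : IsSeparation G R A C X) (Y : Finset V) :
    #(Y ∩ A) + #(Y ∩ C) + #(Y ∩ X) + #(Y ∩ R) = #Y := by
  have hAC := h.sides_disjoint
  have hA := h.left_disjoint
  have hC := h.right_disjoint
  have hX := h.separator_disjoint
  rw [← card_union_of_disjoint (by grind [disjoint_left]),
    ← card_union_of_disjoint (by grind [disjoint_left]),
    ← card_union_of_disjoint (by grind [disjoint_left])]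
  congr 1
  ext v
  have := h.cover v
  grind

lemma sdiff_subset_separator {Y : Finset V} (h : IsSeparation G R A C X) (hA : Disjoint Y A)
    (hC : Disjoint Y C) : Y \ R ⊆ X := by
  intro v hv
  obtain ⟨hvY, hvR⟩ := mem_sdiff.1 hv
  have hvA := disjoint_left.1 hA hvY
  have hvC := disjoint_left.1 hC hvY
  have := h.cover v
  tauto

lemma lt_card_compl [Fintype V] (hF : IsSeparation G ∅ F F' S) (hWF : W ⊆ F) :
    #S < #Wᶜ := by
  have hdisj : Disjoint (F' ∪ S) W := by
    have := hF.sides_disjoint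
    have := hF.left_disjoint
    grind [disjoint_left]
  have hsub : F' ∪ S ⊆ Wᶜ := subset_compl_iff_disjoint_right.2 hdisj
  calc #S < #F' + #S := Nat.lt_add_of_pos_left hF.nonempty_right.card_pos
    _ = #(F' ∪ S) := (card_union_of_disjoint (disjoint_union_right.1 hF.right_disjoint).1).symm
    _ ≤ #Wᶜ := card_le_card hsub

lemma map_subtype_compl {A C X : Finset ((W : Set V)ᶜ : Set V)}
    (h : IsSeparation (G.induce (W : Set V)ᶜ) ∅ A C X) :
    IsSeparation G W (A.map (.subtype _)) (C.map (.subtype _)) (X.map (.subtype _)) where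
  nonempty_left := h.nonempty_left.map
  nonempty_right := h.nonempty_right.map
  cover v := by
    by_cases hv : v ∈ W
    · simp [hv]
    · simpa [hv] using h.cover ⟨v, hv⟩
  sides_disjoint := (disjoint_map _).2 h.sides_disjoint
  left_disjoint := disjoint_union_right.2
    ⟨(disjoint_map _).2 (disjoint_union_right.1 h.left_disjoint).1,
      by simp +contextual [disjoint_left]⟩
  right_disjoint := disjoint_union_right.2
    ⟨(disjoint_map _).2 (disjoint_union_right.1 h.right_disjoint).1,
      by simp +contextual [disjoint_left]⟩
  separator_disjoint := by simp +contextual [disjoint_left]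
  not_adj := by
    simp only [mem_map, forall_exists_index, and_imp]
    rintro _ a ha rfl _ c hc rfl
    exact h.not_adj a ha c hc

variable [Fintype V] [DecidableRel G.Adj]

lemma vertexBoundary_left_subset (h : IsSeparation G R A C X) : vertexBoundary G R A ⊆ X := by
  intro v hv
  obtain ⟨hvA, hvR, a, ha, hav⟩ := mem_vertexBoundary.1 hv
  have hvC : v ∉ C := fun hvC ↦ h.not_adj a ha v hvC hav
  have := h.cover v
  tauto

lemma of_subset_left (h : IsSeparation G ∅ A C X) (hDA : D ⊆ A) (hD : D.Nonempty) :
    IsSeparation G ∅ D (univ \ (D ∪ vertexBoundary G ∅ D)) (vertexBoundary G ∅ D) where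
  nonempty_left := hD
  nonempty_right := by
    obtain ⟨c, hc⟩ := h.nonempty_right
    have hcA : c ∉ A := fun hcA ↦ disjoint_left.1 h.sides_disjoint hcA hc
    have hDc : ∀ d ∈ D, ¬ G.Adj d c := fun d hd ↦ h.not_adj d (hDA hd) c hc
    exact ⟨c, by grind [mem_vertexBoundary]⟩
  cover v := by grind
  sides_disjoint := by grind [disjoint_left]
  left_disjoint := by grind [disjoint_left, mem_vertexBoundary]
  right_disjoint := by grind [disjoint_left]
  separator_disjoint := disjoint_empty_right _
  not_adj := by grind [mem_vertexBoundary]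

lemma le_card_add_of_le_degree {d : ℕ} (h : IsSeparation G R A C X)
    (hdeg : ∀ v, d ≤ G.degree v + 1) : d ≤ #A + #X + #R := by
  obtain ⟨a, ha⟩ := h.nonempty_left
  have := degree_lt_card_add_card_vertexBoundary_add_degreeIn (G := G) (R := R) ha
  have := card_le_card h.vertexBoundary_left_subset
  have : degreeIn G R a ≤ #R := card_le_card inter_subset_right
  have := hdeg a
  omega

lemma expands_right_of_subset_left (h : IsSeparation G ∅ F F' S) (hW : W ⊆ F)
    (hexp : Expands G k F' ∅) : Expands G k F' W := by
  intro D hD hDne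
  refine (hexp D (by grind) hDne).trans (card_le_card fun v hv ↦ ?_)
  obtain ⟨hvD, -, d, hd, hdv⟩ := mem_vertexBoundary.1 hv
  have hvW : v ∉ W := fun hvW ↦ h.not_adj v (hW hvW) d (mem_sdiff.1 (hD hd)).1 hdv.symm
  exact mem_vertexBoundary.2 ⟨hvD, hvW, d, hd, hdv⟩

end IsSeparation

lemma exists_isSeparation_of_not_connected [Fintype V] (hX : #X < Fintype.card V)
    (hconn : ¬ (G.induce (X : Set V)ᶜ).Connected) : ∃ A C, IsSeparation G ∅ A C X := by
  classical
  obtain ⟨x, hx⟩ : ∃ x, x ∉ X := by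
    by_contra! hall
    rw [eq_univ_of_forall hall, card_univ] at hX
    exact hX.false
  have : Nonempty ((X : Set V)ᶜ : Set V) := ⟨⟨x, hx⟩⟩
  obtain ⟨a, b, hab⟩ : ∃ a b, ¬ (G.induce (X : Set V)ᶜ).Reachable a b := by
    by_contra! hall
    exact hconn ⟨hall⟩
  let A : Finset V := {v | ∃ hv : v ∉ X, (G.induce (X : Set V)ᶜ).Reachable a ⟨v, hv⟩}
  have hA : ∀ v, v ∈ A ↔ ∃ hv : v ∉ X, (G.induce (X : Set V)ᶜ).Reachable a ⟨v, hv⟩ := by simp [A]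
  have haA : a.1 ∈ A := (hA _).2 ⟨a.2, .rfl⟩
  have hbA : b.1 ∉ A := fun hb ↦ hab ((hA _).1 hb).2
  have hbX : b.1 ∉ X := b.2
  refine ⟨A, univ \ (A ∪ X), ⟨a, haA⟩, ⟨b, by grind⟩, by grind, by grind [disjoint_left],
    by grind [disjoint_left], by grind [disjoint_left], disjoint_empty_right _, ?_⟩
  intro v hv w hw hvw
  obtain ⟨hvX, hav⟩ := (hA v).1 hv
  have hwX : w ∉ X := by grind
  have hadj : (G.induce (X : Set V)ᶜ).Adj ⟨v, hvX⟩ ⟨w, hwX⟩ := hvw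
  have : w ∈ A := (hA w).2 ⟨hwX, hav.trans hadj.reachable⟩
  grind

lemma exists_isSeparation_of_not_kConnected [Fintype V] (hcard : k + 1 ≤ Fintype.card V)
    (h : ¬ KConnected G k) : ∃ A C X, IsSeparation G ∅ A C X ∧ #X < k := by
  obtain ⟨X, hX, hconn⟩ : ∃ X : Finset V, #X < k ∧ ¬ (G.induce (X : Set V)ᶜ).Connected := by
    by_contra! hall
    exact h ⟨by rwa [Nat.card_eq_fintype_card], hall⟩
  obtain ⟨A, C, hsep⟩ := exists_isSeparation_of_not_connected (by omega) hconn
  exact ⟨A, C, X, hsep, hX⟩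

lemma exists_isSeparation_card_le [Finite V] (hG : G ≠ ⊤) (h : ¬ KConnected G (k + 1)) :
    ∃ A C X, IsSeparation G ∅ A C X ∧ #X ≤ k := by
  have := Fintype.ofFinite V
  obtain ⟨a, c, hne, hac⟩ := SimpleGraph.ne_top_iff_exists_not_adj.1 hG
  by_cases hcard : k + 2 ≤ Fintype.card V
  · obtain ⟨A, C, X, hsep, hX⟩ := exists_isSeparation_of_not_kConnected hcard h
    exact ⟨A, C, X, hsep, Nat.lt_succ_iff.1 hX⟩
  · refine ⟨{a}, {c}, univ \ {a, c}, ⟨singleton_nonempty a, singleton_nonempty c, by grind,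
      by simpa, by grind [disjoint_left], by grind [disjoint_left], disjoint_empty_right _,
      by simpa⟩, ?_⟩
    rw [← compl_eq_univ_sdiff, card_compl, card_pair hne]
    omega

lemma KConnected.le_card_separator (hG : KConnected G k) (h : IsSeparation G ∅ A C X) :
    k ≤ #X := by
  by_contra! hX
  obtain ⟨a, ha⟩ := h.nonempty_left
  obtain ⟨c, hc⟩ := h.nonempty_right
  have haX : a ∉ X := disjoint_left.1 (disjoint_union_right.1 h.left_disjoint).1 ha
  have hcX : c ∉ X := disjoint_left.1 (disjoint_union_right.1 h.right_disjoint).1 hc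
  obtain ⟨walk⟩ := (hG.2 X hX).preconnected ⟨a, haX⟩ ⟨c, hcX⟩
  obtain ⟨d, -, hd₁, hd₂⟩ := walk.exists_boundary_dart (Subtype.val ⁻¹' A) ha
    fun hcA ↦ disjoint_left.1 h.sides_disjoint hcA hc
  have hdX : d.snd.1 ∉ X := d.snd.2
  have hdC : d.snd.1 ∈ C := by
    have := h.cover d.snd.1
    simp only [Set.mem_preimage, mem_coe] at hd₂
    grind
  exact h.not_adj _ hd₁ _ hdC d.adj

variable [Fintype V] [DecidableRel G.Adj]

lemma KConnected.expands_left (hG : KConnected G k) (h : IsSeparation G ∅ A C X) :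
    Expands G k A ∅ := fun D hD hDne ↦
  hG.le_card_separator (h.of_subset_left (by simpa using hD) hDne)

lemma IsSeparation.exists_isEnd (h : IsSeparation G ∅ A C X) (hX : #X ≤ k) :
    ∃ F F' S, IsSeparation G ∅ F F' S ∧ #S ≤ k ∧ IsEnd G k ∅ F := by
  obtain ⟨F, hFA, hF⟩ := exists_isEnd_subset h.nonempty_left
    ((card_le_card h.vertexBoundary_left_subset).trans hX)
  exact ⟨F, _, _, h.of_subset_left hFA hF.nonempty, hF.card_vertexBoundary_le, hF⟩

end Separation

section Uncrossing

variable {V : Type*} [Fintype V] [DecidableEq V] {G : SimpleGraph V} [DecidableRel G.Adj]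
  {k : ℕ} {A C F F' S W X : Finset V}

namespace IsSeparation

lemma le_card_corner (hA : IsSeparation G W A C X) (hF : IsSeparation G ∅ F F' S)
    (hexp : Expands G k F W) (hAF : ¬ Disjoint A F) :
    k ≤ #(A ∩ S) + #(X ∩ S) + #(X ∩ F) := by
  have hAW : Disjoint A W := (disjoint_union_right.1 hA.left_disjoint).2
  have hAF' : A ∩ F ⊆ F \ W := fun v hv ↦ mem_sdiff.2
    ⟨(mem_inter.1 hv).2, disjoint_left.1 hAW (mem_inter.1 hv).1⟩
  have hX : vertexBoundary G W A ⊆ X := hA.vertexBoundary_left_subset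
  have hS : vertexBoundary G W F ⊆ S :=
    (vertexBoundary_subset_of_subset (empty_subset W)).trans hF.vertexBoundary_left_subset
  calc k ≤ #(vertexBoundary G W (A ∩ F)) := hexp _ hAF' (not_disjoint_iff_nonempty_inter.1 hAF)
    _ ≤ #(A ∩ S ∪ X ∩ S ∪ X ∩ F) := card_le_card <| vertexBoundary_inter_subset.trans <| by gcongr
    _ ≤ #(A ∩ S) + #(X ∩ S) + #(X ∩ F) := 
      (card_union_le _ _).trans (Nat.add_le_add_right (card_union_le _ _) _)

lemma disjoint_or_disjoint_of_opposite (hA : IsSeparation G W A C X)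
    (hF : IsSeparation G ∅ F F' S) (hX : #X < k) (hS : #S ≤ k)
    (hexp : Expands G k F W) (hexp' : Expands G k F' W) : Disjoint A F ∨ Disjoint C F' := by
  by_contra! h
  have hAF := hA.le_card_corner hF hexp h.1
  have hCF := hA.symm.le_card_corner hF.symm hexp' h.2
  have hXcard := hF.card_inter_add X
  have hScard := hA.card_inter_add S
  simp only [inter_comm S] at hScard
  omega

lemma half_le_card_separator_inter (hA : IsSeparation G W A C X) (hF : IsSeparation G ∅ F F' S)
    (hS : #S ≤ k) (hAS : k / 2 < #(A ∩ S)) (hexp : Expands G k F W) (hFW : k / 2 ≤ #(F \ W))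
    (hAF : Disjoint A F) :
    k / 2 ≤ #(X ∩ F) ∧ (¬ Disjoint C F → k / 2 < #(X ∩ F)) := by
  have hcorner : ¬ Disjoint C F → k / 2 < #(X ∩ F) := by
    intro hCF
    have hle := hA.symm.le_card_corner hF hexp hCF
    have hScard := hA.card_inter_add S
    simp only [inter_comm S] at hScard
    omega
  refine ⟨?_, hcorner⟩
  by_cases hCF : Disjoint C F
  · exact hFW.trans (card_le_card (subset_inter
      (hA.sdiff_subset_separator hAF.symm hCF.symm) sdiff_subset))
  · exact (hcorner hCF).le

lemma not_disjoint_or_not_disjoint_left (hA : IsSeparation G W A C X)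
    (hF : IsSeparation G ∅ F F' S) (hX : #X < k) (hS : #S ≤ k)
    (hAk : k / 2 < #A) (hCk : k / 2 < #C) (hFk : k / 2 ≤ #(F \ W)) (hFk' : k / 2 ≤ #(F' \ W))
    (hexp : Expands G k F W) (hexp' : Expands G k F' W) :
    ¬ Disjoint A F ∨ ¬ Disjoint A F' := by
  by_contra! ⟨hAF, hAF'⟩
  have hAS : k / 2 < #(A ∩ S) := by
    rwa [inter_eq_left.2 (by simpa using hF.sdiff_subset_separator hAF hAF')]
  have hScard := hA.card_inter_add S
  have hXcard := hF.card_inter_add X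
  simp only [inter_comm S] at hScard
  obtain ⟨hXF, hXF_lt⟩ := hA.half_le_card_separator_inter hF hS hAS hexp hFk hAF
  obtain ⟨hXF', hXF'_lt⟩ := hA.half_le_card_separator_inter hF.symm hS hAS hexp' hFk' hAF'
  by_cases hCF : Disjoint C F
  · by_cases hCF' : Disjoint C F'
    · have hCS : C ∩ S = C := inter_eq_left.2 (by simpa using hF.sdiff_subset_separator hCF hCF')
      rw [hCS] at hScard
      omega
    · have := hXF'_lt hCF'
      omega
  · have := hXF_lt hCF
    omega

lemma not_disjoint_or_not_disjoint_right (hA : IsSeparation G W A C X)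
    (hF : IsSeparation G ∅ F F' S) (hX : #X < k) (hS : #S ≤ k) (hFk : k / 2 ≤ #(F \ W))
    (hexp' : Expands G k F' W) (hAF' : ¬ Disjoint A F') (hCF' : ¬ Disjoint C F') :
    ¬ Disjoint A F ∨ ¬ Disjoint C F := by
  by_contra! ⟨hAF, hCF⟩
  have hle := hA.le_card_corner hF.symm hexp' hAF'
  have hle' := hA.symm.le_card_corner hF.symm hexp' hCF'
  have hXF : k / 2 ≤ #(X ∩ F) := hFk.trans (card_le_card (subset_inter
    (hA.sdiff_subset_separator hAF.symm hCF.symm) sdiff_subset))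
  have hScard := hA.card_inter_add S
  have hXcard := hF.card_inter_add X
  simp only [inter_comm S] at hScard
  omega

/-- The two separations cut each other into four corners. Opposite corners cannot both be
occupied, yet every row and every column contains an occupied corner. -/
lemma le_card_separator_of_expands (hA : IsSeparation G W A C X) (hF : IsSeparation G ∅ F F' S)
    (hS : #S ≤ k) (hAk : k / 2 < #A) (hCk : k / 2 < #C)
    (hFk : k / 2 ≤ #(F \ W)) (hFk' : k / 2 ≤ #(F' \ W))
    (hexp : Expands G k F W) (hexp' : Expands G k F' W) : k ≤ #X := by
  by_contra! hX
  have hdiag := hA.disjoint_or_disjoint_of_opposite hF hX hS hexp hexp'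
  have hdiag' := hA.disjoint_or_disjoint_of_opposite hF.symm hX hS hexp' hexp
  have hrowA := hA.not_disjoint_or_not_disjoint_left hF hX hS hAk hCk hFk hFk' hexp hexp'
  have hrowC := hA.symm.not_disjoint_or_not_disjoint_left hF hX hS hCk hAk hFk hFk' hexp hexp'
  have hcolF := hA.not_disjoint_or_not_disjoint_right hF hX hS hFk hexp'
  have hcolF' := hA.not_disjoint_or_not_disjoint_right hF.symm hX hS hFk' hexp
  tauto

end IsSeparation

theorem kConnected_induce_compl (hdeg : ∀ v, 3 * k / 2 + #W ≤ G.degree v + 1)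
    (hF : IsSeparation G ∅ F F' S) (hS : #S = k) (hWF : W ⊆ F)
    (hexp : Expands G k F W) (hexp' : Expands G k F' W) :
    KConnected (G.induce (W : Set V)ᶜ) k := by
  have hFk : k / 2 ≤ #(F \ W) := by
    have := hF.le_card_add_of_le_degree hdeg
    rw [card_sdiff_of_subset hWF]
    rw [card_empty] at this
    omega
  have hFk' : k / 2 ≤ #(F' \ W) := by
    have := hF.symm.le_card_add_of_le_degree hdeg
    rw [sdiff_eq_self_of_disjoint (hF.sides_disjoint.symm.mono_right hWF)]
    rw [card_empty] at this
    omega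
  have hcard : k + 1 ≤ Fintype.card ((W : Set V)ᶜ : Set V) := by
    have := hF.lt_card_compl hWF
    simp only [Fintype.card_compl_set, coe_sort_coe, Fintype.card_coe, ← card_compl]
    omega
  by_contra hnot
  obtain ⟨A₀, C₀, X₀, hA₀, hX₀⟩ := exists_isSeparation_of_not_kConnected hcard hnot
  have hA := hA₀.map_subtype_compl
  rw [← card_map (.subtype _)] at hX₀
  have hAk := hA.le_card_add_of_le_degree hdeg
  have hCk := hA.symm.le_card_add_of_le_degree hdeg
  exact hX₀.not_ge (hA.le_card_separator_of_expands hF hS.le (by omega) (by omega)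
    hFk hFk' hexp hexp')

end Uncrossing

/-- Let `k, m` be positive integers and let `G` be a non-complete graph with
`κ(G) = k`, `δ(G) ≥ ⌊3k/2⌋ + m - 1` and `Δ(G) = |G| - 1`, and let `t ≥ 0`
with `t + 1 ≤ m`. Then `G` contains a spider `T^{t;m-t-1}_m` of order `m`
such that `G - V(T^{t;m-t-1}_m)` is `k`-connected. -/
theorem stmt_16 {V : Type*} [Fintype V] [DecidableEq V] (G : SimpleGraph V)
    [DecidableRel G.Adj] (k m t : ℕ) (hk : 0 < k) (hm : 0 < m) (ht : t + 1 ≤ m)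
    (hnc : G ≠ ⊤)
    (hκ₁ : KConnected G k) (hκ₂ : ¬ KConnected G (k + 1))
    (hδ : ∀ v : V, 3 * k / 2 + m - 1 ≤ G.degree v)
    (hΔ : ∃ v : V, G.degree v = Fintype.card V - 1) :
    ∃ f : Fin m → V, Function.Injective f ∧
      (∀ a b : Fin m, (spider m t).Adj a b → G.Adj (f a) (f b)) ∧
      KConnected (G.induce ((Set.range f)ᶜ)) k := by
  have hdeg (v : V) : 3 * k / 2 + m ≤ G.degree v + 1 := by
    have := hδ v
    omega
  obtain ⟨u, hu⟩ := hΔ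
  replace hu : G.IsUniversal u := (G.degree_eq_card_sub_one u).1 hu
  obtain ⟨A, C, X, hA, hX⟩ := exists_isSeparation_card_le hnc hκ₂
  obtain ⟨F, F', S, hF, hS, hFend⟩ := hA.exists_isEnd hX
  obtain ⟨f, hfF, hfexp⟩ := hasRemovableSpider_of_isEnd hdeg hu (hF.notMem_left_of_isUniversal hu)
    ht hFend (hκ₁.expands_left hF)
  have hcard : #(univ.image f) = m :=
    (card_image_of_injective univ f.injective).trans (card_fin m)
  refine ⟨f, f.injective, fun _ _ h ↦ f.toHom.map_adj h, ?_⟩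
  rw [← Set.image_univ, ← coe_univ, ← coe_image]
  exact kConnected_induce_compl (by rwa [hcard]) hF (hS.antisymm (hκ₁.le_card_separator hF)) hfF
    hfexp (hF.expands_right_of_subset_left hfF (hκ₁.expands_left hF.symm))
end
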